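/- arXiv:2508.03880 — 2 statements merged into one kernel-verified Lean document; each statement's English description precedes it below -/
import Mathlib

section
/- Let 1 ≤ p < ∞ and let k be a positive integer with kp < n, and let f ∈ W^{k,p}(ℝⁿ). Define g(y) := ∑_{|α| = k} |D^α f(y)| and E := { x ∈ ℝⁿ : (I_k * g)(x) = ∞ }. Then R_{k,p}(E) = 0, and for every x ∈ ℝⁿ \ E the limit lim_{δ→0⁺} ⨍_{B(x,δ)} f(y) dy exists and is a real number. -/
open MeasureTheory Filter Metric Set
open scoped ENNReal NNReal Topology

noncomputable section

abbrev Euc (n : ℕ) := EuclideanSpace ℝ (Fin n)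

/-- Degree of a multi-index. -/
def mdeg {n : ℕ} (α : Fin n → ℕ) : ℕ := ∑ i, α i

/-- Iterated partial derivative along a list of coordinate directions. -/
def listDeriv {n : ℕ} : List (Fin n) → (Euc n → ℝ) → (Euc n → ℝ)
  | [], η => η
  | i :: l, η => fun x => fderiv ℝ (listDeriv l η) x (EuclideanSpace.single i 1)

/-- The partial derivative `D^α η` associated to a multi-index `α`. -/
def mderiv {n : ℕ} (α : Fin n → ℕ) (η : Euc n → ℝ) : Euc n → ℝ :=
  listDeriv ((List.finRange n).flatMap fun i => List.replicate (α i) i) η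

/-- `g` is the weak derivative `D^α f` on `ℝⁿ`. -/
def IsWeakDeriv {n : ℕ} (α : Fin n → ℕ) (f g : Euc n → ℝ) : Prop :=
  ∀ η : Euc n → ℝ, ContDiff ℝ (⊤ : ℕ∞) η → HasCompactSupport η →
    ∫ x, f x * mderiv α η x = (-1 : ℝ) ^ mdeg α * ∫ x, g x * η x

/-- `g` is the weak derivative `D^α f` on an open set `U`. -/
def IsWeakDerivOn {n : ℕ} (U : Set (Euc n)) (α : Fin n → ℕ) (f g : Euc n → ℝ) : Prop :=
  ∀ η : Euc n → ℝ, ContDiff ℝ (⊤ : ℕ∞) η → HasCompactSupport η → tsupport η ⊆ U →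
    ∫ x in U, f x * mderiv α η x = (-1 : ℝ) ^ mdeg α * ∫ x in U, g x * η x

/-- Membership in the Sobolev space `W^{k,p}(U)`. -/
def MemSobolevOn {n : ℕ} (k : ℕ) (p : ℝ) (U : Set (Euc n)) (f : Euc n → ℝ) : Prop :=
  MemLp f (ENNReal.ofReal p) (volume.restrict U) ∧
  ∀ α : Fin n → ℕ, mdeg α ≤ k → ∃ g : Euc n → ℝ,
    MemLp g (ENNReal.ofReal p) (volume.restrict U) ∧ IsWeakDerivOn U α f g

/-- Membership in the local Sobolev space `W^{k,p}_loc(Ω)`. -/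
def MemSobolevLoc {n : ℕ} (k : ℕ) (p : ℝ) (Ω : Set (Euc n)) (f : Euc n → ℝ) : Prop :=
  ∀ U : Set (Euc n), IsOpen U → Bornology.IsBounded U → closure U ⊆ Ω →
    MemSobolevOn k p U f

/-- The normalizing constant `γ(a)` of the Riesz kernel. -/
def rieszGamma (n : ℕ) (a : ℝ) : ℝ :=
  Real.pi ^ ((n : ℝ) / 2) * (2 : ℝ) ^ a * Real.Gamma (a / 2) / Real.Gamma (((n : ℝ) - a) / 2)

/-- The Riesz potential `I_a * g`, valued in `ℝ≥0∞`. -/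
def rieszPot {n : ℕ} (a : ℝ) (g : Euc n → ℝ) (x : Euc n) : ℝ≥0∞ :=
  (ENNReal.ofReal (rieszGamma n a))⁻¹ *
    ∫⁻ y, ENNReal.ofReal (g y) * ENNReal.ofReal (‖x - y‖ ^ (a - (n : ℝ)))

/-- The Riesz capacity `R_{a,p}`. -/
def rieszCap {n : ℕ} (a p : ℝ) (S : Set (Euc n)) : ℝ≥0∞ :=
  ⨅ (g : Euc n → ℝ) (_ : MemLp g (ENNReal.ofReal p) volume ∧ (∀ x, 0 ≤ g x) ∧
      ∀ x ∈ S, 1 ≤ rieszPot a g x),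
    ∫⁻ y, ENNReal.ofReal (g y) ^ p

/-- The precise representative of a (vector-valued) locally integrable function. -/
def preciseRepV {n : ℕ} {F : Type*} [NormedAddCommGroup F] [NormedSpace ℝ F]
    (f : Euc n → F) (x : Euc n) : F :=
  letI := Classical.propDecidable
  if h : ∃ L : F, Tendsto (fun ε : ℝ => ⨍ y in ball x ε, f y) (𝓝[>] (0:ℝ)) (𝓝 L)
  then h.choose else 0

/-- The precise representative of a real-valued locally integrable function. -/
def preciseRep {n : ℕ} (f : Euc n → ℝ) (x : Euc n) : ℝ := preciseRepV f x

/-- The Hardy–Littlewood maximal function (of an `ℝ≥0∞`-valued integrand). -/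
def maxFn {n : ℕ} (g : Euc n → ℝ≥0∞) (x : Euc n) : ℝ≥0∞ :=
  ⨆ (r : ℝ) (_ : 0 < r), (volume (ball x r))⁻¹ * ∫⁻ y in ball x r, g y

/-- `x` is a density point of `S`. -/
def DensityPt {n : ℕ} (S : Set (Euc n)) (x : Euc n) : Prop :=
  Tendsto (fun r : ℝ => volume (S ∩ ball x r) / volume (ball x r)) (𝓝[>] (0:ℝ)) (𝓝 1)

/-- `L` is the approximate differential of `φ` at `x₀`, relative to the domain `A`. -/
def HasApproxDerivAt {n : ℕ} (A : Set (Euc n)) (φ : Euc n → Euc n)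
    (L : Euc n →L[ℝ] Euc n) (x₀ : Euc n) : Prop :=
  DensityPt A x₀ ∧ ∀ ε : ℝ, 0 < ε →
    DensityPt {x | x ∈ A ∧ ‖φ x - φ x₀ - L (x - x₀)‖ ≤ ε * ‖x - x₀‖} x₀

end

/-!
Fix `x` and put `M_w F(t) = ∫_{|y| < 1} w(y) F(x + t y) dy` for a smooth weight `w`. Since
`d/dt F(x + t y) = ∑ᵢ yᵢ (∂ᵢF)(x + t y)`, one has
`M_w F(b) - M_w F(t) = ∑ᵢ ∫_t^b M_{yᵢ w}(∂ᵢF)(s) ds`, and this holds for weak derivatives as well.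

For `|α| = k`, polar coordinates bound `∫_0^1 t^{k-1} |M_w(D^α f)(t)| dt` by a multiple of
`∫ |D^α f(v)| |x - v|^{k-n} dv`, which is finite when `(I_k * g)(x) < ∞`. Exchanging the order of
integration in `∫_0^1 t^j ∫_t^1 |q(s)| ds dt ≤ ∫_0^1 s^{j+1} |q(s)| ds` lowers the order of the
derivative and the power of `t` together, down to integrability near `0` of the means of the first
derivatives. Hence the means of `f` itself converge.

The set where `I_k * g = ∞` has capacity zero because every multiple `ε g` is a competitor for it.
-/

theorem preimage_const_add_smul_ball {E : Type*} [NormedAddCommGroup E] [NormedSpace ℝ E] {t : ℝ}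
    (ht : 0 < t) (x : E) : (fun y : E => x + t • y) ⁻¹' ball x t = ball 0 1 := by
  ext y
  simp only [mem_preimage, mem_ball, dist_self_add_left, norm_smul, Real.norm_of_nonneg ht.le,
    mul_lt_iff_lt_one_right ht, dist_zero_right]

theorem integrableOn_ball_continuous_mul {E : Type*} [NormedAddCommGroup E] [ProperSpace E]
    [MeasurableSpace E] [OpensMeasurableSpace E] {μ : Measure E} {w F : E → ℝ}
    (hw : Continuous w) (hF : LocallyIntegrable F μ) (x : E) (r : ℝ) :
    IntegrableOn (fun y => w y * F y) (ball x r) μ :=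
  ((hF.integrableOn_isCompact (isCompact_closedBall x r)).continuousOn_mul hw.continuousOn
    (isCompact_closedBall x r)).mono_set ball_subset_closedBall

theorem locallyIntegrable_abs {X : Type*} [TopologicalSpace X] [MeasurableSpace X] {μ : Measure X}
    {F : X → ℝ} (hF : LocallyIntegrable F μ) : LocallyIntegrable (|F ·|) μ :=
  fun z => (hF z).norm

section Dilation

variable {E : Type*} [NormedAddCommGroup E] [NormedSpace ℝ E] [FiniteDimensional ℝ E]
  [MeasurableSpace E] [BorelSpace E] {μ : Measure E} [μ.IsAddHaarMeasure]

theorem map_const_add_smul_addHaar {t : ℝ} (ht : t ≠ 0) (x : E) :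
    μ.map (fun y => x + t • y) = ENNReal.ofReal |(t ^ Module.finrank ℝ E)⁻¹| • μ := by
  rw [show (fun y => x + t • y) = (fun y : E => x + y) ∘ (t • ·) from rfl,
    ← Measure.map_map (by fun_prop) (by fun_prop), Measure.map_addHaar_smul μ ht,
    Measure.map_smul, map_add_left_eq_self]

theorem quasiMeasurePreserving_const_add_smul {t : ℝ} (ht : t ≠ 0) (x : E) :
    Measure.QuasiMeasurePreserving (fun y => x + t • y) μ μ :=
  ⟨by fun_prop, map_const_add_smul_addHaar (μ := μ) ht x ▸ Measure.smul_absolutelyContinuous⟩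

theorem integral_comp_const_add_smul {t : ℝ} (x : E) (h : E → ℝ) :
    ∫ y, h (x + t • y) ∂μ = |(t ^ Module.finrank ℝ E)⁻¹| * ∫ v, h v ∂μ := by
  rw [Measure.integral_comp_smul μ (fun v => h (x + v)), integral_add_left_eq_self, smul_eq_mul]

theorem setLIntegral_ball_comp_const_add_smul {t : ℝ} (ht : 0 < t) (x : E) (h : E → ℝ≥0∞) :
    ∫⁻ y in ball 0 1, h (x + t • y) ∂μ =
      ENNReal.ofReal (t ^ Module.finrank ℝ E)⁻¹ * ∫⁻ v in ball x t, h v ∂μ := by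
  have hemb : MeasurableEmbedding fun y : E => x + t • y :=
    ((Homeomorph.smulOfNeZero t ht.ne').trans (Homeomorph.addLeft x)).measurableEmbedding
  rw [← preimage_const_add_smul_ball ht x, ← hemb.lintegral_map, ← hemb.restrict_map,
    map_const_add_smul_addHaar ht.ne' x, Measure.restrict_smul, lintegral_smul_measure,
    abs_of_nonneg (by positivity), smul_eq_mul]

theorem locallyIntegrable_comp_const_add_smul {F : E → ℝ} (hF : LocallyIntegrable F μ) {t : ℝ}
    (ht : t ≠ 0) (x : E) : LocallyIntegrable (fun y => F (x + t • y)) μ := by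
  refine (locallyIntegrable_map_homeomorph
    ((Homeomorph.smulOfNeZero t ht).trans (Homeomorph.addLeft x))).1 ?_
  change LocallyIntegrable F (μ.map fun y => x + t • y)
  rw [map_const_add_smul_addHaar ht x]
  refine fun z => (hF z).imp fun s hs => ⟨hs.1, ?_⟩
  rw [IntegrableOn, Measure.restrict_smul]
  exact hs.2.smul_measure ENNReal.ofReal_ne_top

/-- The integral of `F` over `ball x t`, rescaled to the unit ball and weighted by `w`; for
constant `w` it is a multiple of the average of `F` over `ball x t`. -/
noncomputable def ballMean (μ : Measure E) (w F : E → ℝ) (x : E) (t : ℝ) : ℝ :=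
  ∫ y in ball 0 1, w y * F (x + t • y) ∂μ

theorem setAverage_ball_eq_ballMean (F : E → ℝ) (x : E) {t : ℝ} (ht : 0 < t) :
    ⨍ v in ball x t, F v ∂μ = (μ.real (ball 0 1))⁻¹ * ballMean μ 1 F x t := by
  have hemb : MeasurableEmbedding fun y : E => x + t • y :=
    ((Homeomorph.smulOfNeZero t ht.ne').trans (Homeomorph.addLeft x)).measurableEmbedding
  have hpow : (t ^ Module.finrank ℝ E)⁻¹ * μ.real (ball x t) = μ.real (ball 0 1) := by
    rw [measureReal_def, Measure.addHaar_ball_of_pos μ x ht, ENNReal.toReal_mul,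
      ENNReal.toReal_ofReal (by positivity), inv_mul_cancel_left₀ (by positivity), measureReal_def]
  simp only [ballMean, Pi.one_apply, one_mul]
  rw [← hpow, ← preimage_const_add_smul_ball ht x, ← hemb.setIntegral_map,
    map_const_add_smul_addHaar ht.ne' x, Measure.restrict_smul, integral_smul_measure,
    ENNReal.toReal_ofReal (abs_nonneg _), abs_of_nonneg (by positivity), setAverage_eq,
    smul_eq_mul, smul_eq_mul, mul_inv, inv_inv]
  field_simp

theorem enorm_ballMean_le {w : E → ℝ} {C : ℝ} (hw : ∀ y ∈ ball (0 : E) 1, |w y| ≤ C) (F : E → ℝ)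
    (x : E) {t : ℝ} (ht : 0 < t) :
    ‖ballMean μ w F x t‖ₑ ≤
      ENNReal.ofReal C * (ENNReal.ofReal (t ^ Module.finrank ℝ E)⁻¹ *
        ∫⁻ v in ball x t, ‖F v‖ₑ ∂μ) := by
  calc ‖ballMean μ w F x t‖ₑ
      ≤ ∫⁻ y in ball 0 1, ‖w y * F (x + t • y)‖ₑ ∂μ := enorm_integral_le_lintegral_enorm _
    _ ≤ ∫⁻ y in ball 0 1, ENNReal.ofReal C * ‖F (x + t • y)‖ₑ ∂μ := by
        refine setLIntegral_mono' measurableSet_ball fun y hy => ?_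
        rw [enorm_mul, Real.enorm_eq_ofReal_abs (w y)]
        gcongr
        exact hw y hy
    _ = _ := by
        rw [lintegral_const_mul' _ _ ENNReal.ofReal_ne_top,
          setLIntegral_ball_comp_const_add_smul ht x fun v => ‖F v‖ₑ]

theorem aestronglyMeasurable_ballMean {w F : E → ℝ} (hw : Continuous w)
    (hF : AEStronglyMeasurable F μ) (x : E) :
    AEStronglyMeasurable (ballMean μ w F x) (volume.restrict (Ioi 0)) := by
  have hqmp : Measure.QuasiMeasurePreserving (fun z : ℝ × E => x + z.1 • z.2)
      ((volume.restrict (Ioi 0)).prod μ) μ := by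
    refine QuasiMeasurePreserving.prod_of_right (by fun_prop) ?_
    filter_upwards [ae_restrict_mem measurableSet_Ioi] with t ht
    exact quasiMeasurePreserving_const_add_smul (ne_of_gt ht) x
  have hprod : AEStronglyMeasurable (fun z : ℝ × E => w z.2 * F (x + z.1 • z.2))
      ((volume.restrict (Ioi 0)).prod μ) :=
    (hw.comp continuous_snd).aestronglyMeasurable.mul (hF.comp_quasiMeasurePreserving hqmp)
  exact (hprod.mono_ac (Measure.AbsolutelyContinuous.rfl.prod
    Measure.restrict_le_self.absolutelyContinuous)).integral_prod_right'

theorem integrableOn_ballMean_Ioc {w F : E → ℝ} (hw : Continuous w) (hF : LocallyIntegrable F μ)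
    (x : E) {a : ℝ} (ha : 0 < a) (b : ℝ) : IntegrableOn (ballMean μ w F x) (Ioc a b) := by
  obtain ⟨C, hC⟩ := (isCompact_closedBall (0 : E) 1).exists_bound_of_continuousOn hw.continuousOn
  have hfin : ∫⁻ v in ball x b, ‖F v‖ₑ ∂μ ≠ ∞ :=
    ((hF.integrableOn_isCompact (isCompact_closedBall x b)).mono_set ball_subset_closedBall).2.ne
  set M : ℝ≥0∞ := ENNReal.ofReal C * (ENNReal.ofReal (a ^ Module.finrank ℝ E)⁻¹ *
    ∫⁻ v in ball x b, ‖F v‖ₑ ∂μ)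
  have hM : M ≠ ∞ := ENNReal.mul_ne_top ENNReal.ofReal_ne_top
    (ENNReal.mul_ne_top ENNReal.ofReal_ne_top hfin)
  refine ⟨(aestronglyMeasurable_ballMean hw hF.aestronglyMeasurable x).mono_measure
    (Measure.restrict_mono (fun t ht => ha.trans ht.1) le_rfl),
    .restrict_of_bounded (C := M.toReal) measure_Ioc_lt_top ?_⟩
  filter_upwards [ae_restrict_mem measurableSet_Ioc] with t ht
  rw [← toReal_enorm]
  refine ENNReal.toReal_mono hM ((enorm_ballMean_le (fun y hy =>
    hC y (ball_subset_closedBall hy)) F x (ha.trans ht.1)).trans ?_)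
  have hat := ht.1.le
  have htb := ht.2
  simp only [M]
  gcongr

theorem intervalIntegrable_ballMean {w F : E → ℝ} (hw : Continuous w) (hF : LocallyIntegrable F μ)
    (x : E) {a b : ℝ} (ha : 0 < a) (hab : a ≤ b) :
    IntervalIntegrable (ballMean μ w F x) volume a b :=
  (intervalIntegrable_iff_integrableOn_Ioc_of_le hab).2 (integrableOn_ballMean_Ioc hw hF x ha b)

end Dilation

section RadialDerivative

variable {E : Type*} [NormedAddCommGroup E] [NormedSpace ℝ E]

/-- The divergence of the radial vector field `y ↦ w y • y`; up to the factor `-1/t` it is the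
weight obtained by differentiating in `t` a mean weighted by the dilates of `w`. -/
noncomputable def radialDiv (w : E → ℝ) (y : E) : ℝ := Module.finrank ℝ E * w y + fderiv ℝ w y y

theorem continuous_radialDiv {w : E → ℝ} (hw : ContDiff ℝ 1 w) : Continuous (radialDiv w) :=
  (continuous_const.mul hw.continuous).add
    ((hw.continuous_fderiv one_ne_zero).clm_apply continuous_id)

theorem radialDiv_eq_zero_of_notMem_tsupport {w : E → ℝ} {y : E} (hy : y ∉ tsupport w) :
    radialDiv w y = 0 := by
  simp only [radialDiv, image_eq_zero_of_notMem_tsupport hy, fderiv_of_notMem_tsupport ℝ hy,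
    mul_zero, _root_.zero_apply, add_zero]

theorem hasCompactSupport_radialDiv {w : E → ℝ} (hw : HasCompactSupport w) :
    HasCompactSupport (radialDiv w) :=
  .intro hw.isCompact fun _ => radialDiv_eq_zero_of_notMem_tsupport

theorem exists_norm_comp_inv_smul_le {φ : E → ℝ} (hφ : Continuous φ) (hφs : HasCompactSupport φ)
    {a : ℝ} (ha : 0 < a) (b : ℝ) :
    ∃ C R, ∀ s ∈ Icc a b, ∀ v, |φ (s⁻¹ • v)| ≤ (closedBall 0 R).indicator (fun _ => C) v := by
  obtain ⟨C, hC⟩ := hφ.bounded_above_of_compact_support hφs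
  obtain ⟨R, hR⟩ := hφs.isCompact.isBounded.subset_closedBall 0
  refine ⟨C, b * R, fun s hs v => ?_⟩
  have hs0 : 0 < s := ha.trans_le hs.1
  by_cases hv : v ∈ closedBall 0 (b * R)
  · rw [indicator_of_mem hv]
    exact hC _
  · rw [indicator_of_notMem hv, image_eq_zero_of_notMem_tsupport (f := φ), abs_zero]
    intro hmem
    have hle := mem_closedBall_zero_iff.1 (hR hmem)
    rw [norm_smul, norm_inv, Real.norm_of_nonneg hs0.le, inv_mul_le_iff₀ hs0] at hle
    have hR0 : 0 ≤ R := nonneg_of_mul_nonneg_right ((norm_nonneg v).trans hle) hs0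
    exact hv (mem_closedBall_zero_iff.2 (hle.trans (mul_le_mul_of_nonneg_right hs.2 hR0)))

theorem hasDerivAt_inv_pow_mul_comp_inv_smul {w : E → ℝ} (hw : Differentiable ℝ w) (v : E)
    {t : ℝ} (ht : t ≠ 0) :
    HasDerivAt (fun s : ℝ => (s ^ Module.finrank ℝ E)⁻¹ * w (s⁻¹ • v))
      (-t⁻¹ * ((t ^ Module.finrank ℝ E)⁻¹ * radialDiv w (t⁻¹ • v))) t := by
  have hinner : HasDerivAt (fun s : ℝ => s⁻¹ • v) (-t⁻¹ • t⁻¹ • v) t := by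
    convert (hasDerivAt_inv ht).smul_const v using 1
    rw [smul_smul]
    congr 1
    field_simp
  have hcomp := (hw (t⁻¹ • v)).hasFDerivAt.comp_hasDerivAt t hinner
  have hpow := (hasDerivAt_pow (Module.finrank ℝ E) t).inv (pow_ne_zero _ ht)
  refine (hpow.mul hcomp).congr_deriv ?_
  simp only [radialDiv, map_smul, smul_eq_mul, Pi.inv_apply, Function.comp_apply]
  cases Module.finrank ℝ E with
  | zero => simp
  | succ m =>
    simp only [Nat.add_sub_cancel]
    field_simp
    ring

variable [FiniteDimensional ℝ E] [MeasurableSpace E] [BorelSpace E] {μ : Measure E}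

theorem integral_mul_comp_const_add_smul [μ.IsAddHaarMeasure] (w F : E → ℝ) (x : E) {t : ℝ}
    (ht : 0 < t) :
    ∫ y, w y * F (x + t • y) ∂μ =
      ∫ v, (t ^ Module.finrank ℝ E)⁻¹ * w (t⁻¹ • v) * F (x + v) ∂μ := by
  have h := Measure.integral_comp_smul μ (fun v => w (t⁻¹ • v) * F (x + v)) t
  simp only [inv_smul_smul₀ ht.ne'] at h
  rw [h, abs_of_nonneg (by positivity), smul_eq_mul, ← integral_const_mul]
  simp only [mul_assoc]

theorem hasDerivAt_integral_dilate_mul {w G : E → ℝ} (hw : ContDiff ℝ 1 w)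
    (hws : HasCompactSupport w) (hG : LocallyIntegrable G μ) {t : ℝ} (ht : 0 < t) :
    HasDerivAt (fun s : ℝ => ∫ v, (s ^ Module.finrank ℝ E)⁻¹ * w (s⁻¹ • v) * G v ∂μ)
      (∫ v, -t⁻¹ * ((t ^ Module.finrank ℝ E)⁻¹ * radialDiv w (t⁻¹ • v)) * G v ∂μ) t := by
  set d := Module.finrank ℝ E
  have hφ := continuous_radialDiv hw
  obtain ⟨C, R, hC⟩ :=
    exists_norm_comp_inv_smul_le hφ (hasCompactSupport_radialDiv hws) (half_pos ht) (2 * t)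
  have hwc := hw.continuous
  have hmeas (s : ℝ) :
      AEStronglyMeasurable (fun v => (s ^ d)⁻¹ * w (s⁻¹ • v) * G v) μ :=
    (by fun_prop : Continuous fun v => (s ^ d)⁻¹ * w (s⁻¹ • v)).aestronglyMeasurable.mul
      hG.aestronglyMeasurable
  refine (hasDerivAt_integral_of_dominated_loc_of_deriv_le
    (bound := (closedBall 0 R).indicator fun v => (t / 2)⁻¹ * (((t / 2) ^ d)⁻¹ * C) * ‖G v‖)
    (F' := fun s v => -s⁻¹ * ((s ^ d)⁻¹ * radialDiv w (s⁻¹ • v)) * G v)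
    (Icc_mem_nhds (half_lt_self ht) (by linarith : t < 2 * t)) (.of_forall hmeas) ?_ ?_
    (.of_forall fun v s hs => ?_) ?_ (.of_forall fun v s hs => ?_)).2
  · refine hG.integrable_smul_left_of_hasCompactSupport
      (by fun_prop : Continuous fun v => (t ^ d)⁻¹ * w (t⁻¹ • v)) ?_
    exact (hws.comp_smul (inv_ne_zero ht.ne')).mul_left
  · exact (by fun_prop : Continuous fun v => -t⁻¹ * ((t ^ d)⁻¹ * radialDiv w (t⁻¹ • v)))
      |>.aestronglyMeasurable.mul hG.aestronglyMeasurable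
  · have hs0 : 0 < s := (half_pos ht).trans_le hs.1
    have hsv := hC s hs v
    by_cases hv : v ∈ closedBall 0 R
    · rw [indicator_of_mem hv] at hsv ⊢
      rw [norm_mul, norm_mul, norm_mul, norm_neg, norm_inv, norm_inv, norm_pow,
        Real.norm_of_nonneg hs0.le, Real.norm_eq_abs (radialDiv w _)]
      have := hs.1
      gcongr
    · rw [indicator_of_notMem hv] at hsv ⊢
      rw [abs_nonpos_iff.1 hsv, mul_zero, mul_zero, zero_mul, norm_zero]
  · exact (integrable_indicator_iff measurableSet_closedBall).2
      ((hG.integrableOn_isCompact (isCompact_closedBall 0 R)).norm.const_mul _)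
  · exact (hasDerivAt_inv_pow_mul_comp_inv_smul (hw.differentiable one_ne_zero) v
      ((half_pos ht).trans_le hs.1).ne').mul_const (G v)

theorem locallyIntegrable_const_add {F : E → ℝ} [μ.IsAddHaarMeasure] (hF : LocallyIntegrable F μ)
    (x : E) : LocallyIntegrable (fun v => F (x + v)) μ := by
  simpa only [one_smul] using locallyIntegrable_comp_const_add_smul hF one_ne_zero x

theorem hasDerivAt_integral_mul_comp_const_add_smul [μ.IsAddHaarMeasure] {w F : E → ℝ}
    (hw : ContDiff ℝ 1 w) (hws : HasCompactSupport w) (hF : LocallyIntegrable F μ) (x : E) {t : ℝ}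
    (ht : 0 < t) :
    HasDerivAt (fun s : ℝ => ∫ y, w y * F (x + s • y) ∂μ)
      (-t⁻¹ * ∫ y, radialDiv w y * F (x + t • y) ∂μ) t := by
  have h := hasDerivAt_integral_dilate_mul hw hws (locallyIntegrable_const_add hF x) ht
  simp only [mul_assoc (-t⁻¹)] at h
  rw [integral_const_mul, ← integral_mul_comp_const_add_smul _ _ _ ht] at h
  refine h.congr_of_eventuallyEq ?_
  filter_upwards [eventually_gt_nhds ht] with s hs
  exact integral_mul_comp_const_add_smul _ _ _ hs

end RadialDerivative

section WeakDerivative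

variable {n : ℕ}

theorem contDiff_listDeriv (l : List (Fin n)) {η : Euc n → ℝ} (hη : ContDiff ℝ (⊤ : ℕ∞) η) :
    ContDiff ℝ (⊤ : ℕ∞) (listDeriv l η) := by
  induction l with
  | nil => exact hη
  | cons i l ih => exact (ih.fderiv_right le_rfl).clm_apply contDiff_const

theorem hasCompactSupport_listDeriv (l : List (Fin n)) {η : Euc n → ℝ}
    (hη : HasCompactSupport η) : HasCompactSupport (listDeriv l η) := by
  induction l with
  | nil => exact hη
  | cons i l ih => exact ih.fderiv_apply (𝕜 := ℝ) _

theorem listDeriv_append (l l' : List (Fin n)) (η : Euc n → ℝ) :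
    listDeriv (l ++ l') η = listDeriv l (listDeriv l' η) := by
  induction l with
  | nil => rfl
  | cons i l ih => simp only [List.cons_append, listDeriv, ih]

theorem listDeriv_perm {l l' : List (Fin n)} (hl : l.Perm l') {η : Euc n → ℝ}
    (hη : ContDiff ℝ (⊤ : ℕ∞) η) : listDeriv l η = listDeriv l' η := by
  induction hl with
  | nil => rfl
  | cons i _ ih => simp only [listDeriv, ih]
  | trans _ _ ih ih' => exact ih.trans ih'
  | swap i j l =>
    have hu := contDiff_listDeriv l hη
    funext x
    have hdiff : DifferentiableAt ℝ (fderiv ℝ (listDeriv l η)) x :=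
      (hu.fderiv_right (m := 1) (by norm_cast)).differentiable one_ne_zero x
    have hsymm : IsSymmSndFDerivAt ℝ (listDeriv l η) x :=
      hu.contDiffAt.isSymmSndFDerivAt (by
        simpa using WithTop.coe_le_coe.2 (le_top (a := (2 : ℕ∞))))
    have hfderiv (a b : Euc n) : fderiv ℝ (fun y => fderiv ℝ (listDeriv l η) y a) x b =
        fderiv ℝ (fderiv ℝ (listDeriv l η)) x b a := by
      rw [fderiv_clm_apply hdiff (differentiableAt_const _)]
      simp
    simp only [listDeriv]
    rw [hfderiv, hfderiv, hsymm.eq]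

theorem mderiv_add_single (α : Fin n → ℕ) (i : Fin n) {η : Euc n → ℝ}
    (hη : ContDiff ℝ (⊤ : ℕ∞) η) :
    mderiv (α + Pi.single i 1) η = mderiv α (listDeriv [i] η) := by
  rw [mderiv, mderiv, ← listDeriv_append]
  refine listDeriv_perm (List.perm_iff_count.2 fun j => ?_) hη
  simp only [List.count_append, List.count_flatMap, Function.comp_def, List.count_replicate,
    ← List.ofFn_eq_map, List.sum_ofFn, Pi.add_apply, Pi.single_apply, List.count_singleton,
    beq_iff_eq, Finset.sum_ite_eq', Finset.mem_univ, if_true, @eq_comm _ i]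

theorem mderiv_zero (η : Euc n → ℝ) : mderiv 0 η = η := by
  have hnil : ((List.finRange n).flatMap fun i => List.replicate ((0 : Fin n → ℕ) i) i) = [] := by
    simp
  rw [mderiv, hnil, listDeriv]

theorem mderiv_single (i : Fin n) {η : Euc n → ℝ} (hη : ContDiff ℝ (⊤ : ℕ∞) η) :
    mderiv (Pi.single i 1) η = listDeriv [i] η := by
  rw [← zero_add (Pi.single i 1), mderiv_add_single 0 i hη, mderiv_zero]

theorem mdeg_add_single (α : Fin n → ℕ) (i : Fin n) : mdeg (α + Pi.single i 1) = mdeg α + 1 := by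
  simp [mdeg, Finset.sum_add_distrib]

theorem IsWeakDeriv.of_add_single {α : Fin n → ℕ} {i : Fin n} {f g h : Euc n → ℝ}
    (hg : IsWeakDeriv α f g) (hh : IsWeakDeriv (α + Pi.single i 1) f h) :
    IsWeakDeriv (Pi.single i 1) g h := by
  intro η hη hηs
  have hgη := hg _ (contDiff_listDeriv [i] hη) (hasCompactSupport_listDeriv [i] hηs)
  have hhη := hh η hη hηs
  rw [mderiv_add_single α i hη, hgη, mdeg_add_single, pow_succ, mul_assoc] at hhη
  rw [mderiv_single i hη, mul_left_cancel₀ (pow_ne_zero _ (by norm_num)) hhη]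
  simp [mdeg]

theorem IsWeakDeriv.integral_listDeriv_mul_comp {i : Fin n} {F G : Euc n → ℝ}
    (hFG : IsWeakDeriv (Pi.single i 1) F G) {φ : Euc n → ℝ} (hφ : ContDiff ℝ (⊤ : ℕ∞) φ)
    (hφs : HasCompactSupport φ) (x : Euc n) {t : ℝ} (ht : t ≠ 0) :
    ∫ y, listDeriv [i] φ y * F (x + t • y) = -t * ∫ y, φ y * G (x + t • y) := by
  set η : Euc n → ℝ := fun v => φ (t⁻¹ • (v - x)) with hη
  have hηy (y : Euc n) : η (x + t • y) = φ y := by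
    simp only [hη, add_sub_cancel_left, inv_smul_smul₀ ht]
  have hηderiv (y : Euc n) : listDeriv [i] η (x + t • y) = t⁻¹ * listDeriv [i] φ y := by
    simp only [listDeriv, hη]
    rw [fderiv_comp_sub (f := fun u => φ (t⁻¹ • u)), fderiv_comp_smul, add_sub_cancel_left,
      inv_smul_smul₀ ht]
    rfl
  have hηsmooth : ContDiff ℝ (⊤ : ℕ∞) η := by fun_prop
  have hηsupp : HasCompactSupport η := hφs.comp_homeomorph
    ((Homeomorph.subRight x).trans (Homeomorph.smulOfNeZero t⁻¹ (inv_ne_zero ht)))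
  have hweak := hFG η hηsmooth hηsupp
  rw [mderiv_single i hηsmooth] at hweak
  calc ∫ y, listDeriv [i] φ y * F (x + t • y)
      = t * ∫ y, F (x + t • y) * listDeriv [i] η (x + t • y) := by
        rw [← integral_const_mul]
        refine integral_congr_ae (.of_forall fun y => ?_)
        simp only [hηderiv]
        field_simp
    _ = -t * ∫ y, G (x + t • y) * η (x + t • y) := by
        rw [integral_comp_const_add_smul x fun v => F v * listDeriv [i] η v,
          integral_comp_const_add_smul x fun v => G v * η v, hweak]
        simp [mdeg]
    _ = -t * ∫ y, φ y * G (x + t • y) := by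
        simp only [hηy, mul_comm (φ _)]

/-- The weight `w` multiplied by the `i`-th coordinate. -/
noncomputable def coordMul (i : Fin n) (w : Euc n → ℝ) (y : Euc n) : ℝ := y i * w y

theorem contDiff_coordMul (i : Fin n) {m : ℕ∞} {w : Euc n → ℝ} (hw : ContDiff ℝ m w) :
    ContDiff ℝ m (coordMul i w) :=
  ContDiff.mul (by fun_prop) hw

theorem sum_listDeriv_coordMul {w : Euc n → ℝ} (hw : Differentiable ℝ w) (y : Euc n) :
    ∑ i, listDeriv [i] (coordMul i w) y = radialDiv w y := by
  have hmul (i : Fin n) : listDeriv [i] (coordMul i w) y =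
      w y + fderiv ℝ w y (y i • EuclideanSpace.single i 1) := by
    have hcoord : HasFDerivAt (fun z : Euc n => z i) (EuclideanSpace.proj i : Euc n →L[ℝ] ℝ) y :=
      (EuclideanSpace.proj i : Euc n →L[ℝ] ℝ).hasFDerivAt
    have hprod : HasFDerivAt (coordMul i w) _ y := hcoord.mul (hw y).hasFDerivAt
    simp only [listDeriv, hprod.fderiv]
    simp [add_comm]
  have hsum : ∑ i, y i • EuclideanSpace.single i (1 : ℝ) = y := by
    simpa using (EuclideanSpace.basisFun (Fin n) ℝ).sum_repr y
  simp only [hmul, Finset.sum_add_distrib, ← map_sum, hsum, radialDiv]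
  simp

end WeakDerivative

section Cutoff

theorem exists_contDiff_seq_tendsto_one {E : Type*} [NormedAddCommGroup E] [NormedSpace ℝ E]
    [FiniteDimensional ℝ E] {U : Set E} (hU : IsOpen U) :
    ∃ χ : ℕ → E → ℝ, (∀ m, ContDiff ℝ (⊤ : ℕ∞) (χ m)) ∧ (∀ m, Function.support (χ m) ⊆ U) ∧
      (∀ m y, |χ m y| ≤ 1) ∧ ∀ y ∈ U, Tendsto (χ · y) atTop (𝓝 1) := by
  obtain ⟨f, hfU, hf, hf01⟩ := hU.exists_contDiff_support_eq (n := (⊤ : ℕ∞))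
  have hmem (y : E) : f y ∈ Icc 0 1 := hf01 ⟨y, rfl⟩
  refine ⟨fun m y => 1 - (1 - f y) ^ m,
    fun m => contDiff_const.sub ((contDiff_const.sub hf).pow m),
    fun m y hy => ?_, fun m y => ?_, fun y hy => ?_⟩
  · rw [← hfU]
    refine fun hfy => hy ?_
    simp [hfy]
  · have hpow_nonneg : 0 ≤ (1 - f y) ^ m := pow_nonneg (sub_nonneg.2 (hmem y).2) m
    have hpow_le : (1 - f y) ^ m ≤ 1 :=
      pow_le_one₀ (sub_nonneg.2 (hmem y).2) (sub_le_self _ (hmem y).1)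
    exact abs_le.2 ⟨by linarith, by linarith⟩
  · have hfy : 0 < f y := (hmem y).1.lt_of_ne' (by rwa [← hfU] at hy)
    simpa using (tendsto_pow_atTop_nhds_zero_of_lt_one (sub_nonneg.2 (hmem y).2)
      (sub_lt_self 1 hfy)).const_sub 1

variable {E : Type*} [NormedAddCommGroup E] [NormedSpace ℝ E] [FiniteDimensional ℝ E]
  [MeasurableSpace E] [BorelSpace E] {μ : Measure E} [μ.IsAddHaarMeasure]
  {χ w F : E → ℝ}

theorem norm_ballMean_mul_le (hχ : ∀ y, |χ y| ≤ 1) (hw : Continuous w)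
    (hF : LocallyIntegrable F μ) (x : E) {t : ℝ} (ht : t ≠ 0) :
    ‖ballMean μ (χ * w) F x t‖ ≤ ballMean μ (|w ·|) (|F ·|) x t := by
  refine norm_integral_le_of_norm_le (integrableOn_ball_continuous_mul hw.abs
    (locallyIntegrable_comp_const_add_smul (locallyIntegrable_abs hF) ht x) 0 1)
    (.of_forall fun y => ?_)
  rw [Pi.mul_apply, mul_assoc, norm_mul, norm_mul]
  exact mul_le_of_le_one_left (by positivity) (hχ y)

theorem tendsto_ballMean_mul {χ : ℕ → E → ℝ} (hχ : ∀ m, Continuous (χ m))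
    (hχ_le : ∀ m y, |χ m y| ≤ 1) (hχ_lim : ∀ y ∈ ball 0 1, Tendsto (χ · y) atTop (𝓝 1))
    (hw : Continuous w) (hF : LocallyIntegrable F μ) (x : E) {t : ℝ} (ht : t ≠ 0) :
    Tendsto (fun m => ballMean μ (χ m * w) F x t) atTop (𝓝 (ballMean μ w F x t)) := by
  have hFt := locallyIntegrable_comp_const_add_smul hF ht x
  refine tendsto_integral_of_dominated_convergence (fun y => |w y| * |F (x + t • y)|)
    (fun m => (integrableOn_ball_continuous_mul ((hχ m).mul hw) hFt 0 1).aestronglyMeasurable)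
    (integrableOn_ball_continuous_mul hw.abs (locallyIntegrable_abs hFt) 0 1)
    (fun m => .of_forall fun y => ?_) ?_
  · rw [Pi.mul_apply, mul_assoc, norm_mul, norm_mul]
    exact mul_le_of_le_one_left (by positivity) (hχ_le m y)
  · filter_upwards [ae_restrict_mem measurableSet_ball] with y hy
    simpa using ((hχ_lim y hy).mul_const (w y)).mul_const (F (x + t • y))

theorem tendsto_intervalIntegral_ballMean_mul {χ : ℕ → E → ℝ} (hχ : ∀ m, Continuous (χ m))
    (hχ_le : ∀ m y, |χ m y| ≤ 1) (hχ_lim : ∀ y ∈ ball 0 1, Tendsto (χ · y) atTop (𝓝 1))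
    (hw : Continuous w) (hF : LocallyIntegrable F μ) (x : E) {a b : ℝ} (ha : 0 < a) (hab : a ≤ b) :
    Tendsto (fun m => ∫ t in a..b, ballMean μ (χ m * w) F x t) atTop
      (𝓝 (∫ t in a..b, ballMean μ w F x t)) := by
  have hpos : ∀ᵐ t : ℝ, t ∈ uIoc a b → t ≠ 0 := .of_forall fun t ht =>
    (ha.trans (uIoc_of_le hab ▸ ht : t ∈ Ioc a b).1).ne'
  refine intervalIntegral.tendsto_integral_filter_of_dominated_convergence
    (ballMean μ (|w ·|) (|F ·|) x) (.of_forall fun m => ?_)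
    (.of_forall fun m => hpos.mono fun t ht htm => norm_ballMean_mul_le (hχ_le m) hw hF x (ht htm))
    ?_ (hpos.mono fun t ht htm => tendsto_ballMean_mul hχ hχ_le hχ_lim hw hF x (ht htm))
  · rw [uIoc_of_le hab]
    exact (integrableOn_ballMean_Ioc ((hχ m).mul hw) hF x ha b).aestronglyMeasurable
  · exact intervalIntegrable_ballMean hw.abs (locallyIntegrable_abs hF) x ha hab

end Cutoff

section RadialFTC

variable {n : ℕ} {F : Euc n → ℝ} {G : Fin n → Euc n → ℝ} {w : Euc n → ℝ}

theorem hasDerivAt_integral_mul_comp_of_isWeakDeriv (hw : ContDiff ℝ (⊤ : ℕ∞) w)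
    (hws : HasCompactSupport w) (hF : LocallyIntegrable F)
    (hFG : ∀ i, IsWeakDeriv (Pi.single i 1) F (G i)) (x : Euc n) {t : ℝ} (ht : 0 < t) :
    HasDerivAt (fun s : ℝ => ∫ y, w y * F (x + s • y))
      (∑ i, ∫ y, coordMul i w y * G i (x + t • y)) t := by
  have hcoord (i : Fin n) : HasCompactSupport (coordMul i w) := hws.mul_left
  have hint (i : Fin n) :
      Integrable fun y => listDeriv [i] (coordMul i w) y * F (x + t • y) :=
    (locallyIntegrable_comp_const_add_smul hF ht.ne' x).integrable_smul_left_of_hasCompactSupport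
      (contDiff_listDeriv [i] (contDiff_coordMul i hw)).continuous
      (hasCompactSupport_listDeriv [i] (hcoord i))
  convert hasDerivAt_integral_mul_comp_const_add_smul (hw.of_le (mod_cast le_top)) hws hF x ht
    using 1
  simp only [← sum_listDeriv_coordMul (hw.differentiable (by simp)), Finset.sum_mul]
  rw [integral_finsetSum _ fun i _ => hint i, Finset.mul_sum]
  refine Finset.sum_congr rfl fun i _ => ?_
  rw [(hFG i).integral_listDeriv_mul_comp (contDiff_coordMul i hw) (hcoord i) x ht.ne',
    ← mul_assoc, neg_mul_neg, inv_mul_cancel₀ ht.ne', one_mul]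

theorem ballMean_eq_integral {E : Type*} [NormedAddCommGroup E] [NormedSpace ℝ E]
    [MeasurableSpace E] {μ : Measure E} {w : E → ℝ} (hw : Function.support w ⊆ ball 0 1)
    (F : E → ℝ) (x : E) (t : ℝ) : ballMean μ w F x t = ∫ y, w y * F (x + t • y) ∂μ :=
  setIntegral_eq_integral_of_forall_compl_eq_zero fun y hy => by
    rw [Function.notMem_support.1 fun h => hy (hw h), zero_mul]

theorem ballMean_sub_ballMean_of_support_subset (hw : ContDiff ℝ (⊤ : ℕ∞) w)
    (hws : Function.support w ⊆ ball 0 1) (hF : LocallyIntegrable F)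
    (hG : ∀ i, LocallyIntegrable (G i)) (hFG : ∀ i, IsWeakDeriv (Pi.single i 1) F (G i))
    (x : Euc n) {a b : ℝ} (ha : 0 < a) (hab : a ≤ b) :
    ballMean volume w F x b - ballMean volume w F x a =
      ∫ t in a..b, ∑ i, ballMean volume (coordMul i w) (G i) x t := by
  have hcompact : HasCompactSupport w :=
    .of_support_subset_isCompact (isCompact_closedBall 0 1) (hws.trans ball_subset_closedBall)
  have hcoord (i : Fin n) : Function.support (coordMul i w) ⊆ ball 0 1 :=
    (Function.support_mul_subset_right _ _).trans hws
  have hint (i : Fin n) :=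
    intervalIntegrable_ballMean (contDiff_coordMul i hw).continuous (hG i) x ha hab
  rw [intervalIntegral.integral_eq_sub_of_hasDerivAt (f := ballMean volume w F x) (fun t ht => ?_)
      (by simpa only [Finset.sum_fn] using IntervalIntegrable.sum _ fun i _ => hint i)]
  rw [uIcc_of_le hab] at ht
  simp only [ballMean_eq_integral (hcoord _)]
  rw [funext (ballMean_eq_integral hws F x)]
  exact hasDerivAt_integral_mul_comp_of_isWeakDeriv hw hcompact hF hFG x (ha.trans_le ht.1)

theorem ballMean_sub_ballMean (hw : ContDiff ℝ (⊤ : ℕ∞) w) (hF : LocallyIntegrable F)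
    (hG : ∀ i, LocallyIntegrable (G i)) (hFG : ∀ i, IsWeakDeriv (Pi.single i 1) F (G i))
    (x : Euc n) {a b : ℝ} (ha : 0 < a) (hab : a ≤ b) :
    ballMean volume w F x b - ballMean volume w F x a =
      ∫ t in a..b, ∑ i, ballMean volume (coordMul i w) (G i) x t := by
  -- Cutoffs tending to `1` inside the ball reduce to weights supported there.
  obtain ⟨χ, hχ, hχs, hχ_le, hχ_lim⟩ := exists_contDiff_seq_tendsto_one
    (isOpen_ball (x := (0 : Euc n)) (ε := 1))
  have hχc (m : ℕ) := (hχ m).continuous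
  have hcut (m : ℕ) := ballMean_sub_ballMean_of_support_subset (w := χ m * w) ((hχ m).mul hw)
    ((Function.support_mul_subset_left _ _).trans (hχs m)) hF hG hFG x ha hab
  have hcomm (i : Fin n) (m : ℕ) : coordMul i (χ m * w) = χ m * coordMul i w :=
    funext fun y => mul_left_comm _ _ _
  have hint {v : Euc n → ℝ} (hv : Continuous v) (i : Fin n) :=
    intervalIntegrable_ballMean hv (hG i) x ha hab
  have hcoord (i : Fin n) : Continuous (coordMul i w) := (contDiff_coordMul i hw).continuous
  simp only [hcomm] at hcut
  simp only [intervalIntegral.integral_finsetSum fun i _ => hint ((hχc _).mul (hcoord i)) i] at hcut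
  rw [intervalIntegral.integral_finsetSum fun i _ => hint (hcoord i) i]
  have hmean {t : ℝ} (ht : 0 < t) :=
    tendsto_ballMean_mul hχc hχ_le hχ_lim hw.continuous hF x ht.ne'
  refine tendsto_nhds_unique (((hmean (ha.trans_le hab)).sub (hmean ha)).congr hcut)
    (tendsto_finsetSum _ fun i _ => ?_)
  exact tendsto_intervalIntegral_ballMean_mul hχc hχ_le hχ_lim (hcoord i) (hG i) x ha hab

end RadialFTC

section PrimitiveNearZero

variable {h q : ℝ → ℝ} {b : ℝ} {j : ℕ}

theorem lintegral_enorm_ite_pow_mul_le {s : ℝ} (hs : 0 < s) (c : ℝ) :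
    ∫⁻ t in Ioc 0 b, ‖if t < s then t ^ j * c else 0‖ₑ ≤ ‖s ^ (j + 1) * c‖ₑ := by
  calc ∫⁻ t in Ioc 0 b, ‖if t < s then t ^ j * c else 0‖ₑ
      ≤ ∫⁻ t, (Ioo 0 s).indicator (fun _ => ‖s ^ j * c‖ₑ) t := by
        rw [← lintegral_indicator measurableSet_Ioc]
        refine lintegral_mono fun t => indicator_le (fun t ht => ?_) t
        split_ifs with hts
        · have ht0 : 0 ≤ t := ht.1.le
          rw [indicator_of_mem (show t ∈ Ioo 0 s from ⟨ht.1, hts⟩), enorm_mul, enorm_mul,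
            Real.enorm_of_nonneg (pow_nonneg ht0 j), Real.enorm_of_nonneg (pow_nonneg hs.le j)]
          gcongr
        · simp
    _ = ‖s ^ (j + 1) * c‖ₑ := by
        rw [lintegral_indicator measurableSet_Ioo, setLIntegral_const, Real.volume_Ioo, sub_zero,
          ← Real.enorm_of_nonneg hs.le, ← enorm_mul]
        ring_nf

theorem integrableOn_pow_mul_integral_Ioc
    (hq : IntegrableOn (fun s => s ^ (j + 1) * q s) (Ioc 0 b)) :
    IntegrableOn (fun t => t ^ j * ∫ s in Ioc t b, q s) (Ioc 0 b) := by
  set ν : Measure ℝ := volume.restrict (Ioc 0 b) with hν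
  set K : ℝ × ℝ → ℝ := fun z => if z.1 < z.2 then z.1 ^ j * q z.2 else 0 with hK
  have hqmeas : AEStronglyMeasurable q ν := by
    refine (((by fun_prop : Measurable fun s : ℝ => (s ^ (j + 1))⁻¹).aestronglyMeasurable.mul
      hq.aestronglyMeasurable).congr ?_)
    filter_upwards [ae_restrict_mem measurableSet_Ioc] with s hs
    exact inv_mul_cancel_left₀ (pow_ne_zero _ hs.1.ne') _
  have hKmeas : AEStronglyMeasurable K (ν.prod ν) := by
    have hpow : Measurable fun z : ℝ × ℝ => z.1 ^ j := by fun_prop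
    refine ((hpow.aestronglyMeasurable.mul hqmeas.comp_snd).indicator
      (measurableSet_lt measurable_fst measurable_snd)).congr (.of_forall fun z => ?_)
    simp [hK, indicator_apply]
  have hKfin : HasFiniteIntegral K (ν.prod ν) := by
    calc ∫⁻ z, ‖K z‖ₑ ∂ν.prod ν
        = ∫⁻ s, ∫⁻ t, ‖K (t, s)‖ₑ ∂ν ∂ν := lintegral_prod_symm _ hKmeas.enorm
      _ ≤ ∫⁻ s, ‖s ^ (j + 1) * q s‖ₑ ∂ν := setLIntegral_mono' measurableSet_Ioc fun s hs =>
          lintegral_enorm_ite_pow_mul_le hs.1 (q s)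
      _ < ∞ := hq.2
  refine (Integrable.integral_prod_left ⟨hKmeas, hKfin⟩).congr ?_
  filter_upwards [ae_restrict_mem measurableSet_Ioc] with t ht
  have hinter : Ioc 0 b ∩ Ioi t = Ioc t b := by
    rw [Ioc_inter_Ioi, max_eq_right ht.1.le]
  rw [← hinter, ← integral_const_mul, inter_comm, ← Measure.restrict_restrict measurableSet_Ioi,
    ← integral_indicator measurableSet_Ioi]
  simp [hK, hν, indicator_apply]

theorem integrableOn_pow_mul_of_sub_eq_integral
    (hh : ∀ t ∈ Ioc 0 b, h b - h t = ∫ s in t..b, q s)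
    (hq : IntegrableOn (fun s => s ^ (j + 1) * q s) (Ioc 0 b)) :
    IntegrableOn (fun t => t ^ j * h t) (Ioc 0 b) := by
  have hconst : IntegrableOn (fun t : ℝ => t ^ j * h b) (Ioc 0 b) :=
    (((continuous_id.pow j).mul continuous_const).integrableOn_Icc (a := 0) (b := b)).mono_set
      Ioc_subset_Icc_self
  refine (hconst.sub (integrableOn_pow_mul_integral_Ioc hq)).congr_fun (fun t ht => ?_)
    measurableSet_Ioc
  have := hh t ht
  rw [intervalIntegral.integral_of_le ht.2] at this
  simp only [Pi.sub_apply, ← this]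
  ring

theorem exists_tendsto_nhdsGT_of_sub_eq_integral (hb : 0 < b)
    (hh : ∀ t ∈ Ioc 0 b, h b - h t = ∫ s in t..b, q s) (hq : IntegrableOn q (Ioc 0 b)) :
    ∃ L, Tendsto h (𝓝[>] 0) (𝓝 L) := by
  have hcont := intervalIntegral.continuousOn_primitive_interval_left
    (μ := volume) (f := q) (a := 0) (b := b)
    (by rwa [uIcc_of_le hb.le, integrableOn_Icc_iff_integrableOn_Ioc])
  have hlim : Tendsto (fun t => ∫ s in t..b, q s) (𝓝[>] 0) (𝓝 (∫ s in 0..b, q s)) := by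
    rw [← nhdsWithin_Ioc_eq_nhdsGT hb]
    exact (hcont 0 left_mem_uIcc).mono_left
      (nhdsWithin_mono _ (uIcc_of_le hb.le ▸ Ioc_subset_Icc_self))
  refine ⟨h b - ∫ s in 0..b, q s, (hlim.const_sub (h b)).congr' ?_⟩
  filter_upwards [Ioc_mem_nhdsGT hb] with t ht
  rw [← hh t ht, sub_sub_cancel]

end PrimitiveNearZero

section RieszIntegral

theorem setLIntegral_Ioi_ofReal_rpow {s r : ℝ} (hs : s < 0) (hr : 0 < r) :
    ∫⁻ t in Ioi r, ENNReal.ofReal (t ^ (s - 1)) =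
      ENNReal.ofReal (-s)⁻¹ * ENNReal.ofReal (r ^ s) := by
  have hs' : s - 1 < -1 := by linarith
  rw [← ofReal_integral_eq_lintegral_ofReal (integrableOn_Ioi_rpow_of_lt hs' hr)
    ((ae_restrict_mem measurableSet_Ioi).mono fun t ht => Real.rpow_nonneg (hr.trans ht).le _),
    integral_Ioi_rpow_of_lt hs' hr, sub_add_cancel,
    ← ENNReal.ofReal_mul (inv_nonneg.2 (neg_nonneg.2 hs.le)), inv_neg, neg_mul, neg_div,
    div_eq_inv_mul]

theorem lintegral_rpow_mul_setLIntegral_ball {E : Type*} [NormedAddCommGroup E]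
    [MeasurableSpace E] [OpensMeasurableSpace E] {μ : Measure E} [SFinite μ] [NullSingletonClass μ]
    {φ : E → ℝ≥0∞} (hφ : AEMeasurable φ μ) (x : E) {s : ℝ} (hs : s < 0) :
    ∫⁻ t in Ioi 0, ENNReal.ofReal (t ^ (s - 1)) * ∫⁻ v in ball x t, φ v ∂μ =
      ENNReal.ofReal (-s)⁻¹ * ∫⁻ v, φ v * ENNReal.ofReal (‖x - v‖ ^ s) ∂μ := by
  set K : ℝ → E → ℝ≥0∞ := fun t v =>
    if ‖x - v‖ < t then ENNReal.ofReal (t ^ (s - 1)) * φ v else 0 with hK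
  have hset : MeasurableSet {z : ℝ × E | ‖x - z.2‖ < z.1} :=
    (isOpen_lt (continuous_const.sub continuous_snd).norm continuous_fst).measurableSet
  have hKmeas : AEMeasurable (Function.uncurry K) ((volume.restrict (Ioi 0)).prod μ) :=
    (AEMeasurable.mul (by fun_prop) hφ.comp_snd).indicator hset
  calc ∫⁻ t in Ioi 0, ENNReal.ofReal (t ^ (s - 1)) * ∫⁻ v in ball x t, φ v ∂μ
      = ∫⁻ t in Ioi 0, ∫⁻ v, K t v ∂μ := by
        refine lintegral_congr fun t => ?_
        rw [← lintegral_const_mul' _ _ ENNReal.ofReal_ne_top,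
          ← lintegral_indicator measurableSet_ball]
        simp only [hK, indicator, mem_ball', dist_eq_norm]
    _ = ∫⁻ v, (∫⁻ t in Ioi 0, K t v) ∂μ := lintegral_lintegral_swap hKmeas
    _ = ∫⁻ v, ENNReal.ofReal (-s)⁻¹ * (φ v * ENNReal.ofReal (‖x - v‖ ^ s)) ∂μ := by
        refine lintegral_congr_ae ?_
        filter_upwards [measure_eq_zero_iff_ae_notMem.1 (measure_singleton x)] with v hv
        have hr : 0 < ‖x - v‖ := norm_sub_pos_iff.2 (Ne.symm hv)
        have hKv : (K · v) = (Ioi ‖x - v‖).indicator fun t => ENNReal.ofReal (t ^ (s - 1)) * φ v :=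
          rfl
        rw [hKv, lintegral_indicator measurableSet_Ioi, Measure.restrict_restrict measurableSet_Ioi,
          inter_eq_left.2 (Ioi_subset_Ioi hr.le), lintegral_mul_const _ (by fun_prop),
          setLIntegral_Ioi_ofReal_rpow hs hr, mul_assoc, mul_comm (φ v)]
    _ = _ := lintegral_const_mul' _ _ ENNReal.ofReal_ne_top

variable {E : Type*} [NormedAddCommGroup E] [NormedSpace ℝ E] [FiniteDimensional ℝ E]
  [MeasurableSpace E] [BorelSpace E] {μ : Measure E} [μ.IsAddHaarMeasure]

theorem integrableOn_pow_mul_ballMean {w G : E → ℝ} (hw : Continuous w)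
    (hG : AEStronglyMeasurable G μ) {j : ℕ} (hj : j + 1 < Module.finrank ℝ E) (x : E)
    (hfin : ∫⁻ v, ‖G v‖ₑ * ENNReal.ofReal (‖x - v‖ ^ ((j + 1 : ℝ) - Module.finrank ℝ E)) ∂μ ≠ ∞)
    (b : ℝ) :
    IntegrableOn (fun t => t ^ j * ballMean μ w G x t) (Ioc 0 b) := by
  obtain ⟨C, hC⟩ := (isCompact_closedBall (0 : E) 1).exists_bound_of_continuousOn hw.continuousOn
  have : Nontrivial E := Module.nontrivial_of_finrank_pos (pos_of_gt hj)
  set s : ℝ := (j + 1 : ℝ) - Module.finrank ℝ E with hs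
  have hs0 : s < 0 := sub_neg.2 (mod_cast hj)
  have hsub : Ioc 0 b ⊆ Ioi (0 : ℝ) := fun t ht => ht.1
  have hpow {t : ℝ} (ht : 0 < t) : t ^ j * (t ^ Module.finrank ℝ E)⁻¹ = t ^ (s - 1) := by
    rw [hs, ← Real.rpow_natCast, ← Real.rpow_natCast, ← Real.rpow_neg ht.le, ← Real.rpow_add ht]
    ring_nf
  refine ⟨(by fun_prop : Measurable fun t : ℝ => t ^ j).aestronglyMeasurable.mul
    ((aestronglyMeasurable_ballMean hw hG x).mono_measure (Measure.restrict_mono hsub le_rfl)), ?_⟩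
  calc ∫⁻ t in Ioc 0 b, ‖t ^ j * ballMean μ w G x t‖ₑ
      ≤ ∫⁻ t in Ioc 0 b, ENNReal.ofReal C *
          (ENNReal.ofReal (t ^ (s - 1)) * ∫⁻ v in ball x t, ‖G v‖ₑ ∂μ) := by
        refine setLIntegral_mono' measurableSet_Ioc fun t ht => ?_
        rw [enorm_mul, Real.enorm_of_nonneg (pow_nonneg ht.1.le j), ← hpow ht.1,
          ENNReal.ofReal_mul (pow_nonneg ht.1.le j), mul_assoc, mul_left_comm]
        gcongr
        exact enorm_ballMean_le (fun y hy => hC y (ball_subset_closedBall hy)) G x ht.1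
    _ ≤ ∫⁻ t in Ioi 0, ENNReal.ofReal C *
          (ENNReal.ofReal (t ^ (s - 1)) * ∫⁻ v in ball x t, ‖G v‖ₑ ∂μ) :=
        lintegral_mono_set hsub
    _ = ENNReal.ofReal C * (ENNReal.ofReal (-s)⁻¹ *
          ∫⁻ v, ‖G v‖ₑ * ENNReal.ofReal (‖x - v‖ ^ s) ∂μ) := by
        rw [lintegral_const_mul' _ _ ENNReal.ofReal_ne_top,
          lintegral_rpow_mul_setLIntegral_ball hG.enorm x hs0]
    _ < ∞ := (ENNReal.mul_ne_top ENNReal.ofReal_ne_top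
        (ENNReal.mul_ne_top ENNReal.ofReal_ne_top hfin)).lt_top

end RieszIntegral

section Averages

variable {n : ℕ}

theorem integrableOn_pow_mul_ballMean_of_isWeakDeriv {F : Euc n → ℝ} {G : Fin n → Euc n → ℝ}
    {w : Euc n → ℝ} (hw : ContDiff ℝ (⊤ : ℕ∞) w) (hF : LocallyIntegrable F)
    (hG : ∀ i, LocallyIntegrable (G i)) (hFG : ∀ i, IsWeakDeriv (Pi.single i 1) F (G i))
    (x : Euc n) {b : ℝ} {j : ℕ}
    (hint : ∀ i, IntegrableOn
      (fun t => t ^ (j + 1) * ballMean volume (coordMul i w) (G i) x t) (Ioc 0 b)) :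
    IntegrableOn (fun t => t ^ j * ballMean volume w F x t) (Ioc 0 b) := by
  refine integrableOn_pow_mul_of_sub_eq_integral
    (fun t ht => ballMean_sub_ballMean hw hF hG hFG x ht.1 ht.2) ?_
  simp only [Finset.mul_sum]
  exact integrable_finsetSum _ fun i _ => hint i

/-- Each step down in the order of differentiation trades one factor `t` for one radial
integration. -/
theorem integrableOn_pow_mul_ballMean_of_riesz {k : ℕ} {f : Euc n → ℝ}
    {Df : (Fin n → ℕ) → Euc n → ℝ} (hkn : k < n)
    (hDf_int : ∀ α, mdeg α ≤ k → LocallyIntegrable (Df α))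
    (hDf : ∀ α, mdeg α ≤ k → IsWeakDeriv α f (Df α)) (x : Euc n)
    (hfin : ∀ α, mdeg α = k → ∫⁻ v, ‖Df α v‖ₑ * ENNReal.ofReal (‖x - v‖ ^ ((k : ℝ) - n)) ≠ ∞)
    (b : ℝ) {j : ℕ} (hjk : j < k) :
    ∀ α, mdeg α = j + 1 → ∀ w : Euc n → ℝ, ContDiff ℝ (⊤ : ℕ∞) w →
      IntegrableOn (fun t => t ^ j * ballMean volume w (Df α) x t) (Ioc 0 b) := by
  obtain ⟨m, rfl⟩ : ∃ m, k = m + 1 := Nat.exists_eq_add_one_of_ne_zero (Nat.ne_zero_of_lt hjk)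
  induction Nat.le_of_lt_succ hjk using Nat.decreasingInduction with
  | self =>
    intro α hα w hw
    refine integrableOn_pow_mul_ballMean hw.continuous (hDf_int α hα.le).aestronglyMeasurable
      (by rwa [finrank_euclideanSpace_fin]) x ?_ b
    rw [finrank_euclideanSpace_fin]
    exact_mod_cast hfin α hα
  | of_succ j hj ih =>
    intro α hα w hw
    have hdeg (i : Fin n) : mdeg (α + Pi.single i 1) = j + 1 + 1 := by rw [mdeg_add_single, hα]
    have hle (i : Fin n) : mdeg (α + Pi.single i 1) ≤ m + 1 := (hdeg i).trans_le (by lia)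
    have hα_le : mdeg α ≤ m + 1 := hα.trans_le (by lia)
    exact integrableOn_pow_mul_ballMean_of_isWeakDeriv hw (hDf_int α hα_le)
      (fun i => hDf_int _ (hle i)) (fun i => (hDf α hα_le).of_add_single (hDf _ (hle i))) x
      fun i => ih (by lia) _ (hdeg i) _ (contDiff_coordMul i hw)

theorem exists_tendsto_setAverage_ball {k : ℕ} (hk : 0 < k) (hkn : k < n) {f : Euc n → ℝ}
    (hf : LocallyIntegrable f) {Df : (Fin n → ℕ) → Euc n → ℝ}
    (hDf_int : ∀ α, mdeg α ≤ k → LocallyIntegrable (Df α))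
    (hDf : ∀ α, mdeg α ≤ k → IsWeakDeriv α f (Df α)) (x : Euc n)
    (hfin : ∀ α, mdeg α = k → ∫⁻ v, ‖Df α v‖ₑ * ENNReal.ofReal (‖x - v‖ ^ ((k : ℝ) - n)) ≠ ∞) :
    ∃ L : ℝ, Tendsto (fun δ : ℝ => ⨍ y in ball x δ, f y) (𝓝[>] 0) (𝓝 L) := by
  have hdeg (i : Fin n) : mdeg (Pi.single i 1) = 0 + 1 := by simp [mdeg]
  have hle (i : Fin n) : mdeg (Pi.single i 1) ≤ k := (hdeg i).trans_le hk
  have hone : ContDiff ℝ (⊤ : ℕ∞) (1 : Euc n → ℝ) := contDiff_const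
  have hint (i : Fin n) : IntegrableOn
      (ballMean volume (coordMul i 1) (Df (Pi.single i 1)) x) (Ioc 0 1) := by
    simpa only [pow_zero, one_mul] using integrableOn_pow_mul_ballMean_of_riesz hkn hDf_int hDf x
      hfin 1 hk _ (hdeg i) _ (contDiff_coordMul i hone)
  obtain ⟨L, hL⟩ := exists_tendsto_nhdsGT_of_sub_eq_integral one_pos
    (fun t ht => ballMean_sub_ballMean hone hf (fun i => hDf_int _ (hle i))
      (fun i => hDf _ (hle i)) x ht.1 ht.2)
    (integrable_finsetSum _ fun i _ => hint i)
  refine ⟨_, (hL.const_mul (volume.real (ball (0 : Euc n) 1))⁻¹).congr' ?_⟩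
  filter_upwards [self_mem_nhdsWithin] with t ht
  exact (setAverage_ball_eq_ballMean f x ht).symm

end Averages

section RieszCapacity

variable {n : ℕ}

theorem rieszPot_const_mul (a : ℝ) {ε : ℝ} (hε : 0 ≤ ε) (g : Euc n → ℝ) (x : Euc n) :
    rieszPot a (fun y => ε * g y) x = ENNReal.ofReal ε * rieszPot a g x := by
  simp only [rieszPot, ENNReal.ofReal_mul hε, mul_assoc]
  rw [lintegral_const_mul' _ _ ENNReal.ofReal_ne_top, mul_left_comm]

theorem lintegral_mul_rpow_ne_top_of_rieszPot_ne_top {a : ℝ} {g : Euc n → ℝ} {x : Euc n}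
    (hx : rieszPot a g x ≠ ∞) :
    ∫⁻ y, ENNReal.ofReal (g y) * ENNReal.ofReal (‖x - y‖ ^ (a - (n : ℝ))) ≠ ∞ := fun htop =>
  hx (by rw [rieszPot, htop, ENNReal.mul_top (ENNReal.inv_ne_zero.2 ENNReal.ofReal_ne_top)])

theorem rieszCap_setOf_rieszPot_eq_top (a : ℝ) {p : ℝ} (hp : 0 < p) {g : Euc n → ℝ}
    (hg : MemLp g (ENNReal.ofReal p)) (hg_nonneg : ∀ x, 0 ≤ g x) :
    rieszCap a p {x | rieszPot a g x = ∞} = 0 := by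
  set M := ∫⁻ y, ENNReal.ofReal (g y) ^ p
  have hM : M ≠ ∞ := by
    have hlt := lintegral_rpow_enorm_lt_top_of_eLpNorm_lt_top
      (ENNReal.ofReal_pos.2 hp).ne' ENNReal.ofReal_ne_top hg.2
    simp only [ENNReal.toReal_ofReal hp.le, Real.enorm_of_nonneg (hg_nonneg _)] at hlt
    exact hlt.ne
  have hle {ε : ℝ} (hε : 0 < ε) :
      rieszCap a p {x | rieszPot a g x = ∞} ≤ ENNReal.ofReal ε ^ p * M := by
    refine (iInf₂_le (fun y => ε * g y) ⟨hg.const_mul ε,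
      fun y => mul_nonneg hε.le (hg_nonneg y), fun y hy => ?_⟩).trans_eq ?_
    · simp only [ENNReal.ofReal_mul hε.le, ENNReal.mul_rpow_of_nonneg _ _ hp.le]
      exact lintegral_const_mul' _ _ (ENNReal.rpow_ne_top_of_nonneg hp.le ENNReal.ofReal_ne_top)
    · rw [rieszPot_const_mul a hε.le, show rieszPot a g y = ∞ from hy,
        ENNReal.mul_top (ENNReal.ofReal_pos.2 hε).ne']
      exact le_top
  have hlim : Tendsto (fun ε : ℝ => ENNReal.ofReal ε ^ p * M) (𝓝[>] 0) (𝓝 0) := by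
    have hcont : Continuous fun ε : ℝ => ENNReal.ofReal ε ^ p * M :=
      (ENNReal.continuous_mul_const hM).comp
        (ENNReal.continuous_rpow_const.comp ENNReal.continuous_ofReal)
    simpa [hp] using (hcont.tendsto 0).mono_left nhdsWithin_le_nhds
  exact le_antisymm (ge_of_tendsto hlim (eventually_nhdsWithin_of_forall fun ε hε => hle hε)) bot_le

end RieszCapacity

section TopOrderSum

variable {n k : ℕ} {Df : (Fin n → ℕ) → Euc n → ℝ}

/-- The function `∑_{|α| = k} |D^α f|`, where `Df α` stands for `D^α f`. The entries of such an `α`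
are at most `k`, so the sum runs over the finite type `Fin n → Fin (k + 1)`. -/
noncomputable def topOrderSum (k : ℕ) (Df : (Fin n → ℕ) → Euc n → ℝ) (y : Euc n) : ℝ :=
  ∑ β : Fin n → Fin (k + 1),
    if mdeg (fun i => (β i : ℕ)) = k then |Df (fun i => (β i : ℕ)) y| else 0

theorem topOrderSum_nonneg (k : ℕ) (Df : (Fin n → ℕ) → Euc n → ℝ) (y : Euc n) :
    0 ≤ topOrderSum k Df y :=
  Finset.sum_nonneg fun β _ => by positivity

theorem abs_le_topOrderSum {α : Fin n → ℕ} (hα : mdeg α = k) (Df : (Fin n → ℕ) → Euc n → ℝ)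
    (y : Euc n) : |Df α y| ≤ topOrderSum k Df y := by
  have hle (i : Fin n) : α i ≤ k :=
    hα ▸ Finset.single_le_sum (fun _ _ => Nat.zero_le _) (Finset.mem_univ i)
  set β : Fin n → Fin (k + 1) := fun i => ⟨α i, Nat.lt_succ_of_le (hle i)⟩
  have hβ : (if mdeg (fun i => (β i : ℕ)) = k then |Df (fun i => (β i : ℕ)) y| else 0) =
      |Df α y| := if_pos hα
  rw [← hβ]
  exact Finset.single_le_sum
    (f := fun β : Fin n → Fin (k + 1) =>
      if mdeg (fun i => (β i : ℕ)) = k then |Df (fun i => (β i : ℕ)) y| else 0)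
    (fun β _ => by positivity) (Finset.mem_univ β)

theorem memLp_topOrderSum {q : ℝ≥0∞} (hDf : ∀ α, mdeg α = k → MemLp (Df α) q) :
    MemLp (topOrderSum k Df) q := by
  refine memLp_finsetSum _ fun β _ => ?_
  split_ifs with hβ
  · exact (hDf _ hβ).abs
  · exact MemLp.zero

end TopOrderSum

theorem lebesgue_points_sobolev_general {n k : ℕ} {p : ℝ} (hk : 0 < k) (hkn : k < n) (hp : 0 < p)
    (f : Euc n → ℝ) (hf : LocallyIntegrable f) (Df : (Fin n → ℕ) → Euc n → ℝ)
    (hDf_int : ∀ α, mdeg α ≤ k → LocallyIntegrable (Df α))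
    (hDf : ∀ α, mdeg α ≤ k → IsWeakDeriv α f (Df α))
    (hDf_memLp : ∀ α, mdeg α = k → MemLp (Df α) (ENNReal.ofReal p)) :
    rieszCap k p {x | rieszPot k (topOrderSum k Df) x = ∞} = 0 ∧
    ∀ x, rieszPot k (topOrderSum k Df) x ≠ ∞ → ∃ L : ℝ,
      Tendsto (fun δ : ℝ => ⨍ y in ball x δ, f y) (𝓝[>] 0) (𝓝 L) := by
  refine ⟨rieszCap_setOf_rieszPot_eq_top k hp (memLp_topOrderSum hDf_memLp)
    (topOrderSum_nonneg k Df), fun x hx => ?_⟩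
  refine exists_tendsto_setAverage_ball hk hkn hf hDf_int hDf x fun α hα => ?_
  refine ne_top_of_le_ne_top (lintegral_mul_rpow_ne_top_of_rieszPot_ne_top hx) ?_
  gcongr with v
  rw [Real.enorm_eq_ofReal_abs]
  exact ENNReal.ofReal_le_ofReal (abs_le_topOrderSum hα Df v)

/-- Theorem 3.5: Lebesgue points of Sobolev functions outside a set of
Riesz capacity zero. -/
theorem lebesgue_points_sobolev {n k : ℕ} {p : ℝ}
    (hk : 0 < k) (hp : 1 ≤ p) (hkpn : (k : ℝ) * p < n)
    (f : Euc n → ℝ) (hf : MemLp f (ENNReal.ofReal p) volume)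
    (Df : (Fin n → ℕ) → Euc n → ℝ)
    (hDf : ∀ α : Fin n → ℕ, mdeg α ≤ k →
      MemLp (Df α) (ENNReal.ofReal p) volume ∧ IsWeakDeriv α f (Df α))
    (g : Euc n → ℝ)
    (hg : g = fun y => ∑ β : Fin n → Fin (k + 1),
      if mdeg (fun i => (β i : ℕ)) = k then |Df (fun i => (β i : ℕ)) y| else 0)
    (E : Set (Euc n)) (hE : E = {x | rieszPot (k : ℝ) g x = ∞}) :
    rieszCap (k : ℝ) p E = 0 ∧
    ∀ x ∉ E, ∃ L : ℝ,
      Tendsto (fun δ : ℝ => ⨍ y in ball x δ, f y) (𝓝[>] (0:ℝ)) (𝓝 L) := by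
  have hkn : k < n := by
    exact_mod_cast (le_mul_of_one_le_right (Nat.cast_nonneg k) hp).trans_lt hkpn
  have hp_one : 1 ≤ ENNReal.ofReal p := ENNReal.one_le_ofReal.2 hp
  subst hg hE
  exact lebesgue_points_sobolev_general hk hkn (one_pos.trans_le hp) f
    (hf.locallyIntegrable hp_one) Df (fun α hα => (hDf α hα).1.locallyIntegrable hp_one)
    (fun α hα => (hDf α hα).2) fun α hα => (hDf α hα.le).1
end

section
/- Let 1 < p < ∞ and α > 0 with αp < n, and set p* := np/(n − αp). There exists a constant C = C(n,p,α) such that for every set E ⊂ ℝⁿ and every non-negative f ∈ L^p(ℝⁿ) with (I_α * f)(x) ≥ 1 for all x ∈ E, one has |E|^{p/p*} ≤ C ‖f‖_{L^p(ℝⁿ)}^p, where |E| denotes the Lebesgue outer measure of E. Consequently, if R_{α,p}(E) = 0 then |E| = 0. -/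
open MeasureTheory Filter Metric Set
open scoped ENNReal NNReal Topology

/-!
The estimate is the weak-type Young inequality for convolution with a kernel `k` in weak `L^r`,
`r = n / (n - α)`, applied to the Riesz kernel. Truncate `k` at height `t`. By Hölder's inequality
`f ⋆ min |k| t` is bounded by a power of `t` times `‖f‖_p`, and `t` is chosen so that this bound is
`1 / 2`. Where `f ⋆ |k| ≥ 1`, the remaining part `f ⋆ (|k| - t)⁺` is then at least `1 / 2`; as
`(|k| - t)⁺` is integrable, Young's inequality bounds its `L^p` norm, and Chebyshev's inequality
gives the claim.
-/

section Convolution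

variable {G : Type*} [AddGroup G] [MeasurableSpace G] [MeasurableAdd₂ G] [MeasurableNeg G]
  {μ : Measure G} [μ.IsAddLeftInvariant]

theorem lintegral_neg_add_right_eq_self [μ.IsNegInvariant] (g : G → ℝ≥0∞) (x : G) :
    ∫⁻ y, g (-y + x) ∂μ = ∫⁻ y, g y ∂μ := by
  calc ∫⁻ y, g (-y + x) ∂μ
      = ∫⁻ y, g (-(-x + y)) ∂μ := by simp_rw [neg_add_rev, neg_neg]
    _ = ∫⁻ y, g y ∂μ := by
      rw [lintegral_add_left_eq_self (fun y => g (-y)), lintegral_neg_eq_self]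

variable [SFinite μ]

theorem lintegral_lconvolution {f g : G → ℝ≥0∞} (hf : AEMeasurable f μ) (hg : AEMeasurable g μ) :
    ∫⁻ x, (f ⋆ₗ[μ] g) x ∂μ = (∫⁻ x, f x ∂μ) * ∫⁻ x, g x ∂μ := by
  simp_rw [lconvolution_def]
  rw [lintegral_lintegral_swap (by fun_prop), ← lintegral_mul_const'' _ hf]
  refine lintegral_congr fun y => ?_
  have hg' : AEMeasurable (fun x => g (-y + x)) μ :=
    hg.comp_quasiMeasurePreserving (measurePreserving_add_left μ (-y)).quasiMeasurePreserving
  rw [lintegral_const_mul'' _ hg', lintegral_add_left_eq_self g (-y)]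

variable [μ.IsNegInvariant] {p : ℝ}

theorem lconvolution_le_Lp_mul_Lq {q : ℝ} (hpq : p.HolderConjugate q) {f g : G → ℝ≥0∞}
    (hf : AEMeasurable f μ) (hg : AEMeasurable g μ) (x : G) :
    (f ⋆ₗ[μ] g) x ≤ (∫⁻ y, f y ^ p ∂μ) ^ (1 / p) * (∫⁻ y, g y ^ q ∂μ) ^ (1 / q) := by
  rw [← lintegral_neg_add_right_eq_self (fun y => g y ^ q) x]
  exact ENNReal.lintegral_mul_le_Lp_mul_Lq μ hpq hf (by fun_prop)

theorem lconvolution_rpow_le (hp : 1 ≤ p) {f g : G → ℝ≥0∞}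
    (hf : AEMeasurable f μ) (hg : AEMeasurable g μ) (x : G) :
    (f ⋆ₗ[μ] g) x ^ p ≤ ((fun y => f y ^ p) ⋆ₗ[μ] g) x * (∫⁻ y, g y ∂μ) ^ (p - 1) := by
  have hp₀ : 0 < p := by linarith
  have hp' : 0 ≤ 1 - p⁻¹ := sub_nonneg.2 (inv_le_one_of_one_le₀ hp)
  have factor (a b : ℝ≥0∞) : a * b = (a ^ p * b) ^ p⁻¹ * b ^ (1 - p⁻¹) := by
    rw [ENNReal.mul_rpow_of_nonneg _ _ (by positivity), ENNReal.rpow_rpow_inv hp₀.ne', mul_assoc,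
      ← ENNReal.rpow_add_of_nonneg _ _ (by positivity) hp', add_sub_cancel, ENNReal.rpow_one]
  have holder : (f ⋆ₗ[μ] g) x ≤
      ((fun y => f y ^ p) ⋆ₗ[μ] g) x ^ p⁻¹ * (∫⁻ y, g y ∂μ) ^ (1 - p⁻¹) := by
    simp_rw [lconvolution_def, ← lintegral_neg_add_right_eq_self g x, factor (f _)]
    exact ENNReal.lintegral_mul_norm_pow_le (by fun_prop) (by fun_prop) (by positivity) hp'
      (add_sub_cancel _ _)
  calc (f ⋆ₗ[μ] g) x ^ p
      ≤ (((fun y => f y ^ p) ⋆ₗ[μ] g) x ^ p⁻¹ * (∫⁻ y, g y ∂μ) ^ (1 - p⁻¹)) ^ p := by gcongr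
    _ = ((fun y => f y ^ p) ⋆ₗ[μ] g) x * (∫⁻ y, g y ∂μ) ^ (p - 1) := by
      rw [ENNReal.mul_rpow_of_nonneg _ _ hp₀.le, ENNReal.rpow_inv_rpow hp₀.ne',
        ← ENNReal.rpow_mul, sub_mul, inv_mul_cancel₀ hp₀.ne', one_mul]

theorem lintegral_lconvolution_rpow_le (hp : 1 ≤ p) {f g : G → ℝ≥0∞}
    (hf : AEMeasurable f μ) (hg : AEMeasurable g μ) :
    ∫⁻ x, (f ⋆ₗ[μ] g) x ^ p ∂μ ≤ (∫⁻ x, g x ∂μ) ^ p * ∫⁻ x, f x ^ p ∂μ := by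
  calc ∫⁻ x, (f ⋆ₗ[μ] g) x ^ p ∂μ
      ≤ ∫⁻ x, ((fun y => f y ^ p) ⋆ₗ[μ] g) x * (∫⁻ y, g y ∂μ) ^ (p - 1) ∂μ :=
        lintegral_mono (lconvolution_rpow_le hp hf hg)
    _ = (∫⁻ x, g x ∂μ) ^ (1 + (p - 1)) * ∫⁻ x, f x ^ p ∂μ := by
      rw [lintegral_mul_const'' _ (by fun_prop), lintegral_lconvolution (by fun_prop) hg,
        ENNReal.rpow_add_of_nonneg _ _ zero_le_one (by linarith), ENNReal.rpow_one]
      ring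
    _ = (∫⁻ x, g x ∂μ) ^ p * ∫⁻ x, f x ^ p ∂μ := by rw [add_sub_cancel]

theorem meas_one_le_lconvolution_add_le {q : ℝ} (hpq : p.HolderConjugate q) {f g h : G → ℝ≥0∞}
    (hf : AEMeasurable f μ) (hg : AEMeasurable g μ) (hh : AEMeasurable h μ)
    (hfh : (∫⁻ y, f y ^ p ∂μ) ^ (1 / p) * (∫⁻ y, h y ^ q ∂μ) ^ (1 / q) ≤ 1 / 2) :
    μ {x | 1 ≤ (f ⋆ₗ[μ] (g + h)) x} ≤ (2 * ∫⁻ x, g x ∂μ) ^ p * ∫⁻ x, f x ^ p ∂μ := by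
  have hp := hpq.lt
  have one_le_of_mem (x) (hx : 1 ≤ (f ⋆ₗ[μ] (g + h)) x) : 1 ≤ 2 ^ p * (f ⋆ₗ[μ] g) x ^ p := by
    have hadd : (f ⋆ₗ[μ] (g + h)) x = (f ⋆ₗ[μ] g) x + (f ⋆ₗ[μ] h) x := by
      simp only [lconvolution_def, Pi.add_apply, mul_add]
      exact lintegral_add_left' (by fun_prop) _
    have half_le : 1 / 2 ≤ (f ⋆ₗ[μ] g) x := by
      have hh_le := (lconvolution_le_Lp_mul_Lq hpq hf hh x).trans hfh
      refine (ENNReal.add_le_add_iff_right (by simp : (1 / 2 : ℝ≥0∞) ≠ ∞)).1 ?_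
      calc (1 / 2 + 1 / 2 : ℝ≥0∞) = 1 := ENNReal.add_halves 1
        _ ≤ (f ⋆ₗ[μ] g) x + (f ⋆ₗ[μ] h) x := hadd ▸ hx
        _ ≤ (f ⋆ₗ[μ] g) x + 1 / 2 := by gcongr
    rw [← ENNReal.mul_rpow_of_nonneg _ _ hpq.nonneg]
    refine ENNReal.one_le_rpow ?_ hpq.pos
    rwa [ENNReal.div_le_iff_le_mul (by simp) (by simp), mul_comm] at half_le
  calc μ {x | 1 ≤ (f ⋆ₗ[μ] (g + h)) x}
      ≤ μ {x | 1 ≤ 2 ^ p * (f ⋆ₗ[μ] g) x ^ p} := measure_mono one_le_of_mem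
    _ ≤ ∫⁻ x, 2 ^ p * (f ⋆ₗ[μ] g) x ^ p ∂μ := by
      simpa using mul_meas_ge_le_lintegral₀ (μ := μ)
        (f := fun x => 2 ^ p * (f ⋆ₗ[μ] g) x ^ p) (by fun_prop) 1
    _ ≤ 2 ^ p * ((∫⁻ x, g x ∂μ) ^ p * ∫⁻ x, f x ^ p ∂μ) := by
      rw [lintegral_const_mul'' _ (by fun_prop)]
      gcongr
      exact lintegral_lconvolution_rpow_le hp.le hf hg
    _ = (2 * ∫⁻ x, g x ∂μ) ^ p * ∫⁻ x, f x ^ p ∂μ := by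
      rw [ENNReal.mul_rpow_of_nonneg _ _ hpq.nonneg, mul_assoc]

end Convolution

theorem lintegral_Ioi_rpow_of_lt {a t : ℝ} (ha : a < -1) (ht : 0 < t) :
    ∫⁻ s in Ioi t, ENNReal.ofReal (s ^ a) = ENNReal.ofReal (-t ^ (a + 1) / (a + 1)) := by
  rw [← integral_Ioi_rpow_of_lt ha ht,
    ofReal_integral_eq_lintegral_ofReal (integrableOn_Ioi_rpow_of_lt ha ht)]
  filter_upwards [ae_restrict_mem measurableSet_Ioi] with s hs
  exact Real.rpow_nonneg (ht.trans hs).le a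

theorem lintegral_Ioo_zero_rpow {a t : ℝ} (ha : -1 < a) (ht : 0 < t) :
    ∫⁻ s in Ioo 0 t, ENNReal.ofReal (s ^ a) = ENNReal.ofReal (t ^ (a + 1) / (a + 1)) := by
  have hint : ∫ s in Ioo 0 t, s ^ a = t ^ (a + 1) / (a + 1) := by
    rw [← integral_Ioc_eq_integral_Ioo, ← intervalIntegral.integral_of_le ht.le,
      integral_rpow (Or.inl ha), Real.zero_rpow (by linarith), sub_zero]
  rw [← hint, ofReal_integral_eq_lintegral_ofReal
    ((intervalIntegral.integrableOn_Ioo_rpow_iff ht).2 ha)]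
  filter_upwards [ae_restrict_mem measurableSet_Ioo] with s hs
  exact Real.rpow_nonneg hs.1.le a

section WeakLp

variable {X F : Type*} [MeasurableSpace X] [NormedAddCommGroup F]

/-- The weak-`L^r` bound `t ^ r * μ {‖k‖ > t} ≤ A`, in the form in which it is integrated over `t`
by the layer cake formula. -/
def HasWeakLpBound (k : X → F) (r A : ℝ) (μ : Measure X) : Prop :=
  ∀ t, 0 < t → μ {x | t < ‖k x‖} ≤ ENNReal.ofReal (A * t ^ (-r))

namespace HasWeakLpBound

variable {μ : Measure X} {k : X → F} {r A t : ℝ}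

theorem const_smul [NormedSpace ℝ F] (hk : HasWeakLpBound k r A μ) {c : ℝ} (hc : 0 < c) :
    HasWeakLpBound (c • k) r (c ^ r * A) μ := by
  intro t ht
  have hset : {x | t < ‖(c • k) x‖} = {x | t / c < ‖k x‖} := by
    ext x
    simp [norm_smul, abs_of_pos hc, div_lt_iff₀' hc]
  rw [hset]
  refine (hk _ (by positivity)).trans_eq (congrArg _ ?_)
  rw [Real.div_rpow ht.le hc.le, Real.rpow_neg hc.le]
  field_simp

theorem lintegral_norm_sub_le (hk : HasWeakLpBound k r A μ) (hkm : AEStronglyMeasurable k μ)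
    (hr : 1 < r) (hA : 0 ≤ A) (ht : 0 < t) :
    ∫⁻ x, ENNReal.ofReal (‖k x‖ - t) ∂μ ≤ ENNReal.ofReal (A / (r - 1) * t ^ (1 - r)) := by
  have htail (s : ℝ) (hs : 0 < s) :
      μ {x | s < max (‖k x‖ - t) 0} ≤ ENNReal.ofReal A * ENNReal.ofReal ((s + t) ^ (-r)) := by
    rw [← ENNReal.ofReal_mul hA]
    refine (measure_mono fun x hx => ?_).trans (hk (s + t) (by positivity))
    have hx : s < ‖k x‖ - t := (lt_max_iff.1 hx).resolve_right hs.not_gt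
    exact lt_sub_iff_add_lt.1 hx
  have hshift : ∫⁻ s in Ioi 0, ENNReal.ofReal ((s + t) ^ (-r)) =
      ∫⁻ s in Ioi t, ENNReal.ofReal (s ^ (-r)) := by
    simpa using (measurePreserving_add_right volume t).setLIntegral_comp_preimage_emb
      (measurableEmbedding_addRight t) (fun s => ENNReal.ofReal (s ^ (-r))) (Ioi t)
  calc ∫⁻ x, ENNReal.ofReal (‖k x‖ - t) ∂μ
      = ∫⁻ x, ENNReal.ofReal (max (‖k x‖ - t) 0) ∂μ := by simp
    _ = ∫⁻ s in Ioi 0, μ {x | s < max (‖k x‖ - t) 0} :=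
      lintegral_eq_lintegral_meas_lt μ (.of_forall fun x => le_max_right _ _)
        ((hkm.norm.aemeasurable.sub_const t).max aemeasurable_const)
    _ ≤ ∫⁻ s in Ioi 0, ENNReal.ofReal A * ENNReal.ofReal ((s + t) ^ (-r)) :=
      setLIntegral_mono' measurableSet_Ioi htail
    _ = ENNReal.ofReal (A / (r - 1) * t ^ (1 - r)) := by
      rw [lintegral_const_mul' _ _ ENNReal.ofReal_ne_top, hshift,
        lintegral_Ioi_rpow_of_lt (by linarith) ht, ← ENNReal.ofReal_mul hA, neg_add_eq_sub,
        ← neg_div_neg_eq, neg_neg, neg_sub]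
      ring_nf

theorem lintegral_min_norm_rpow_le (hk : HasWeakLpBound k r A μ) (hkm : AEStronglyMeasurable k μ)
    {q : ℝ} (hq : 0 < q) (hrq : r < q) (hA : 0 ≤ A) (ht : 0 < t) :
    ∫⁻ x, ENNReal.ofReal (min ‖k x‖ t) ^ q ∂μ ≤
      ENNReal.ofReal (q * A / (q - r) * t ^ (q - r)) := by
  have htail (s : ℝ) (hs : s ∈ Ioi 0) :
      μ {x | s < min ‖k x‖ t} * ENNReal.ofReal (s ^ (q - 1)) ≤
        (Ioo 0 t).indicator (fun s => ENNReal.ofReal A * ENNReal.ofReal (s ^ (q - 1 - r))) s := by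
    have hs : 0 < s := hs
    by_cases hst : s < t
    · rw [indicator_of_mem (show s ∈ Ioo 0 t from ⟨hs, hst⟩), ← ENNReal.ofReal_mul hA,
        sub_eq_neg_add _ r, Real.rpow_add hs, ← mul_assoc, ENNReal.ofReal_mul (by positivity)]
      gcongr
      refine (measure_mono fun x hx => ?_).trans (hk s hs)
      have hx : s < min ‖k x‖ t := hx
      exact (lt_min_iff.1 hx).1
    · simp [hst]
  calc ∫⁻ x, ENNReal.ofReal (min ‖k x‖ t) ^ q ∂μ
      = ∫⁻ x, ENNReal.ofReal ((min ‖k x‖ t) ^ q) ∂μ := by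
        simp_rw [ENNReal.ofReal_rpow_of_nonneg (le_min (norm_nonneg _) ht.le) hq.le]
    _ = ENNReal.ofReal q *
          ∫⁻ s in Ioi 0, μ {x | s < min ‖k x‖ t} * ENNReal.ofReal (s ^ (q - 1)) :=
      lintegral_rpow_eq_lintegral_meas_lt_mul μ
        (.of_forall fun x => le_min (norm_nonneg _) ht.le)
        (hkm.norm.aemeasurable.min aemeasurable_const) hq
    _ ≤ ENNReal.ofReal q * (ENNReal.ofReal A *
          ∫⁻ s in Ioo 0 t, ENNReal.ofReal (s ^ (q - 1 - r))) := by
      gcongr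
      rw [← lintegral_const_mul' _ _ ENNReal.ofReal_ne_top]
      refine (setLIntegral_mono' measurableSet_Ioi htail).trans ?_
      rw [lintegral_indicator measurableSet_Ioo]
      exact lintegral_mono' (Measure.restrict_mono_measure Measure.restrict_le_self _) le_rfl
    _ = ENNReal.ofReal (q * A / (q - r) * t ^ (q - r)) := by
      rw [lintegral_Ioo_zero_rpow (by linarith) ht, ← ENNReal.ofReal_mul hA,
        ← ENNReal.ofReal_mul hq.le]
      ring_nf

end HasWeakLpBound

end WeakLp

section WeakYoung

/-- `N` plays the role of `∫ f ^ p`: the level `t` makes the Hölder bound for `f ⋆ min |k| t`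
equal to `1 / 2`, and then the Chebyshev bound for `f ⋆ (|k| - t)⁺` becomes linear in `N`. -/
theorem exists_truncation_level {p q r s A₁ A₂ : ℝ} (hpq : p.HolderConjugate q) (hr : 0 < r)
    (hs : 0 < s) (hprs : p⁻¹ + r⁻¹ = 1 + s⁻¹) (hA₁ : 0 < A₁) (hA₂ : 0 < A₂) :
    ∃ C, 0 < C ∧ ∀ N, 0 < N → ∃ t, 0 < t ∧ N ^ (1 / p) * (A₂ * t ^ (q - r)) ^ (1 / q) = 1 / 2 ∧
      ((2 * (A₁ * t ^ (1 - r))) ^ p * N) ^ (p / s) = C * N := by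
  have hp := hpq.pos
  have hq := hpq.symm.pos
  have hlow : -(s / r) * ((q - r) * (1 / q)) = -1 := by
    have hq_inv : q⁻¹ = r⁻¹ - s⁻¹ := by linarith [hpq.inv_add_inv_eq_one]
    rw [one_div, sub_mul, mul_inv_cancel₀ hq.ne', hq_inv]
    field_simp
    ring
  have hhigh : 1 / p * (-(s / r) * ((1 - r) * (p * (p / s)))) + p / s = 1 := by
    have hs_inv : s⁻¹ = p⁻¹ + r⁻¹ - 1 := by linarith
    calc 1 / p * (-(s / r) * ((1 - r) * (p * (p / s)))) + p / s
        = p * (1 - r⁻¹ + s⁻¹) := by field_simp; ring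
      _ = 1 := by rw [hs_inv]; field_simp; ring
  set D := 2 * A₂ ^ (1 / q) with hD
  have hD₀ : 0 < D := by positivity
  refine ⟨(2 * A₁) ^ (p * (p / s)) * D ^ (-(s / r) * ((1 - r) * (p * (p / s)))), by positivity,
    fun N hN => ⟨(D * N ^ (1 / p)) ^ (-(s / r)), by positivity, ?_, ?_⟩⟩
  · rw [Real.mul_rpow hA₂.le (by positivity), ← Real.rpow_mul (by positivity),
      ← Real.rpow_mul (by positivity), hlow, Real.rpow_neg_one, hD]
    field_simp
  · rw [← mul_assoc 2, Real.mul_rpow (by positivity) hN.le, ← Real.rpow_mul (by positivity),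
      Real.mul_rpow (by positivity) (by positivity), ← Real.rpow_mul (by positivity),
      ← Real.rpow_mul (by positivity), Real.mul_rpow hD₀.le (by positivity),
      ← Real.rpow_mul hN.le, ← mul_assoc, mul_assoc, ← Real.rpow_add hN, hhigh, Real.rpow_one]

theorem enorm_eq_ofReal_norm_sub_add_ofReal_min_norm {X F : Type*} [NormedAddCommGroup F]
    (k : X → F) {t : ℝ} (ht : 0 ≤ t) :
    (fun x => ‖k x‖ₑ) =
      (fun x => ENNReal.ofReal (‖k x‖ - t)) + fun x => ENNReal.ofReal (min ‖k x‖ t) := by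
  ext x
  rw [Pi.add_apply, ← ofReal_norm]
  obtain hle | hlt := le_or_gt ‖k x‖ t
  · rw [min_eq_left hle, ENNReal.ofReal_of_nonpos (sub_nonpos.2 hle), zero_add]
  · rw [min_eq_right hlt.le, ← ENNReal.ofReal_add (sub_pos.2 hlt).le ht, sub_add_cancel]

variable {G F : Type*} [AddGroup G] [MeasurableSpace G] [MeasurableAdd₂ G] [MeasurableNeg G]
  [NormedAddCommGroup F] {μ : Measure G} [SFinite μ] [μ.IsAddLeftInvariant] [μ.IsNegInvariant]
  {k : G → F} {p r s A : ℝ}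

namespace HasWeakLpBound

theorem exists_meas_one_le_lconvolution_rpow_le_of_lintegral_le (hk : HasWeakLpBound k r A μ)
    (hkm : AEStronglyMeasurable k μ) (hA : 0 < A) (hp : 1 < p) (hr : 1 < r) (hs : 0 < s)
    (hprs : p⁻¹ + r⁻¹ = 1 + s⁻¹) :
    ∃ C, 0 < C ∧ ∀ N, 0 < N → ∀ f : G → ℝ≥0∞, AEMeasurable f μ →
      ∫⁻ y, f y ^ p ∂μ ≤ ENNReal.ofReal N →
      μ {x | 1 ≤ (f ⋆ₗ[μ] fun x => ‖k x‖ₑ) x} ^ (p / s) ≤ ENNReal.ofReal (C * N) := by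
  obtain ⟨q, hpq⟩ : ∃ q, p.HolderConjugate q := ⟨_, .conjExponent hp⟩
  have hrq : r < q := by
    have hq_inv : q⁻¹ = r⁻¹ - s⁻¹ := by linarith [hpq.inv_add_inv_eq_one]
    rw [← inv_lt_inv₀ hpq.symm.pos (by positivity), hq_inv]
    linarith [inv_pos.2 hs]
  have hq := hpq.symm.pos
  have hA₁ : 0 < A / (r - 1) := div_pos hA (sub_pos.2 hr)
  have hA₂ : 0 < q * A / (q - r) := div_pos (mul_pos hq hA) (sub_pos.2 hrq)
  obtain ⟨C, hC, hlevel⟩ := exists_truncation_level hpq (by positivity) hs hprs hA₁ hA₂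
  refine ⟨C, hC, fun N hN f hf hfN => ?_⟩
  obtain ⟨t, ht, hlow, hhigh⟩ := hlevel N hN
  have hsub : AEMeasurable (fun x => ENNReal.ofReal (‖k x‖ - t)) μ :=
    (hkm.norm.aemeasurable.sub_const t).ennreal_ofReal
  have hmin : AEMeasurable (fun x => ENNReal.ofReal (min ‖k x‖ t)) μ :=
    (hkm.norm.aemeasurable.min aemeasurable_const).ennreal_ofReal
  have hsmall : (∫⁻ y, f y ^ p ∂μ) ^ (1 / p) *
      (∫⁻ y, ENNReal.ofReal (min ‖k y‖ t) ^ q ∂μ) ^ (1 / q) ≤ 1 / 2 := by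
    grw [hfN, hk.lintegral_min_norm_rpow_le hkm hq hrq hA.le ht]
    rw [ENNReal.ofReal_rpow_of_pos hN, ENNReal.ofReal_rpow_of_pos (by positivity),
      ← ENNReal.ofReal_mul (by positivity), hlow]
    simp
  rw [enorm_eq_ofReal_norm_sub_add_ofReal_min_norm k ht.le]
  grw [meas_one_le_lconvolution_add_le hpq hf hsub hmin hsmall, hfN,
    hk.lintegral_norm_sub_le hkm hr hA.le ht]
  rw [← hhigh, ← ENNReal.ofReal_ofNat, ← ENNReal.ofReal_mul zero_le_two,
    ENNReal.ofReal_rpow_of_pos (by positivity), ← ENNReal.ofReal_mul (by positivity),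
    ENNReal.ofReal_rpow_of_pos (by positivity)]

theorem exists_meas_one_le_lconvolution_rpow_le (hk : HasWeakLpBound k r A μ)
    (hkm : AEStronglyMeasurable k μ) (hA : 0 < A) (hp : 1 < p) (hr : 1 < r) (hs : 0 < s)
    (hprs : p⁻¹ + r⁻¹ = 1 + s⁻¹) :
    ∃ C, 0 < C ∧ ∀ f : G → ℝ≥0∞, AEMeasurable f μ →
      μ {x | 1 ≤ (f ⋆ₗ[μ] fun x => ‖k x‖ₑ) x} ^ (p / s) ≤
        ENNReal.ofReal C * ∫⁻ y, f y ^ p ∂μ := by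
  obtain ⟨C, hC, hbound⟩ :=
    hk.exists_meas_one_le_lconvolution_rpow_le_of_lintegral_le hkm hA hp hr hs hprs
  refine ⟨C, hC, fun f hf => ?_⟩
  have hC' : ENNReal.ofReal C ≠ 0 := by simpa using hC
  rw [mul_comm, ← ENNReal.div_le_iff hC' ENNReal.ofReal_ne_top]
  refine le_of_forall_gt_imp_ge_of_dense fun N hN => ?_
  rw [ENNReal.div_le_iff hC' ENNReal.ofReal_ne_top, mul_comm]
  obtain rfl | hN_top := eq_or_ne N ∞
  · simp [hC']
  have hN_pos : 0 < N.toReal := ENNReal.toReal_pos (bot_lt_of_lt hN).ne' hN_top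
  simpa only [ENNReal.ofReal_mul hC.le, ENNReal.ofReal_toReal hN_top] using
    hbound N.toReal hN_pos f hf (hN.le.trans_eq (ENNReal.ofReal_toReal hN_top).symm)

end HasWeakLpBound

end WeakYoung

theorem hasWeakLpBound_norm_rpow_neg {E : Type*} [NormedAddCommGroup E] [NormedSpace ℝ E]
    [FiniteDimensional ℝ E] [MeasurableSpace E] [BorelSpace E] (μ : Measure E) [μ.IsAddHaarMeasure]
    {b : ℝ} (hb : 0 < b) :
    HasWeakLpBound (fun x : E => ‖x‖ ^ (-b)) (Module.finrank ℝ E / b) (μ.real (ball 0 1)) μ := by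
  intro t ht
  have hsub : {x : E | t < ‖‖x‖ ^ (-b)‖} ⊆ ball 0 (t ^ (-b)⁻¹) := by
    intro x hx
    have hx : t < ‖x‖ ^ (-b) := by simpa [abs_of_nonneg, Real.rpow_nonneg] using hx
    rw [mem_ball_zero_iff]
    obtain h | h := (norm_nonneg x).eq_or_lt
    · rw [← h]
      positivity
    · exact (Real.lt_rpow_inv_iff_of_neg h ht (neg_neg_of_pos hb)).2 hx
  calc μ {x : E | t < ‖‖x‖ ^ (-b)‖}
      ≤ μ (ball 0 (t ^ (-b)⁻¹)) := measure_mono hsub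
    _ = ENNReal.ofReal (μ.real (ball 0 1) * t ^ (-(Module.finrank ℝ E / b))) := by
      rw [Measure.addHaar_ball_of_pos μ 0 (by positivity), mul_comm,
        ENNReal.ofReal_mul (by positivity), ofReal_measureReal,
        ← Real.rpow_mul_natCast ht.le, inv_neg, neg_mul, inv_mul_eq_div]

section RieszPotential

variable {n : ℕ} {a p : ℝ}

/-- The normalized Riesz kernel `γ(a)⁻¹ |x| ^ (a - n)`, real-valued (hence `0` instead of `∞` at
the origin when `a < n`), so that `rieszPot` becomes a Lebesgue convolution. -/
noncomputable def rieszKernel (n : ℕ) (a : ℝ) (x : Euc n) : ℝ :=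
  (rieszGamma n a)⁻¹ * ‖x‖ ^ (a - n)

theorem rieszGamma_pos (ha : 0 < a) (han : a < n) : 0 < rieszGamma n a := by
  have := Real.Gamma_pos_of_pos (half_pos ha)
  have := Real.Gamma_pos_of_pos (half_pos (sub_pos.2 han))
  unfold rieszGamma
  positivity

theorem hasWeakLpBound_rieszKernel (ha : 0 < a) (han : a < n) :
    HasWeakLpBound (rieszKernel n a) (n / (n - a))
      ((rieszGamma n a)⁻¹ ^ (n / (n - a)) * volume.real (ball (0 : Euc n) 1)) volume := by
  have hpow := hasWeakLpBound_norm_rpow_neg (volume : Measure (Euc n)) (sub_pos.2 han)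
  rw [finrank_euclideanSpace_fin, neg_sub] at hpow
  exact hpow.const_smul (inv_pos.2 (rieszGamma_pos ha han))

theorem rieszPot_eq_lconvolution (ha : 0 < a) (han : a < n) (g : Euc n → ℝ) :
    rieszPot a g = (fun y => ENNReal.ofReal (g y)) ⋆ₗ[volume] fun x => ‖rieszKernel n a x‖ₑ := by
  have hγ := rieszGamma_pos ha han
  ext x
  have hkernel (y : Euc n) : ‖rieszKernel n a (-y + x)‖ₑ =
      (ENNReal.ofReal (rieszGamma n a))⁻¹ * ENNReal.ofReal (‖x - y‖ ^ (a - n)) := by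
    rw [rieszKernel, Real.enorm_of_nonneg (by positivity), ENNReal.ofReal_mul (by positivity),
      ENNReal.ofReal_inv_of_pos hγ, neg_add_eq_sub]
  simp_rw [rieszPot, lconvolution_def, hkernel, mul_left_comm (ENNReal.ofReal (g _))]
  rw [lintegral_const_mul' _ _ (by simpa using hγ)]

theorem exists_volume_one_le_rieszPot_rpow_le (ha : 0 < a) (hp : 1 < p) (hapn : a * p < n) :
    ∃ C : ℝ, 0 < C ∧ ∀ f : Euc n → ℝ, AEMeasurable f →
      volume {x | 1 ≤ rieszPot a f x} ^ (p / (n * p / (n - a * p))) ≤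
        ENNReal.ofReal C * ∫⁻ y, ENNReal.ofReal (f y) ^ p := by
  have han : a < n := by nlinarith
  have hn : (0 : ℝ) < n := ha.trans han
  have hna : 0 < n - a := sub_pos.2 han
  have hs : 0 < n * p / (n - a * p) := div_pos (by positivity) (sub_pos.2 hapn)
  have hr : 1 < n / (n - a) := by rw [one_lt_div hna]; linarith
  have hprs : p⁻¹ + (n / (n - a))⁻¹ = 1 + (n * p / (n - a * p))⁻¹ := by field_simp; ring
  have hγ := rieszGamma_pos ha han
  have hball : 0 < volume.real (ball (0 : Euc n) 1) :=
    ENNReal.toReal_pos (measure_ball_pos volume 0 one_pos).ne' measure_ball_lt_top.ne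
  have hkernel : Measurable (rieszKernel n a) := by
    unfold rieszKernel
    fun_prop
  obtain ⟨C, hC, hweak⟩ :=
    (hasWeakLpBound_rieszKernel ha han).exists_meas_one_le_lconvolution_rpow_le
      hkernel.aestronglyMeasurable (by positivity) hp hr hs hprs
  refine ⟨C, hC, fun f hf => ?_⟩
  rw [rieszPot_eq_lconvolution ha han]
  exact hweak _ hf.ennreal_ofReal

theorem le_mul_rieszCap {S : Set (Euc n)} {m C : ℝ≥0∞} (hC₀ : C ≠ 0) (hC : C ≠ ∞)
    (h : ∀ g : Euc n → ℝ, MemLp g (ENNReal.ofReal p) volume → (∀ x, 0 ≤ g x) →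
      (∀ x ∈ S, 1 ≤ rieszPot a g x) → m ≤ C * ∫⁻ y, ENNReal.ofReal (g y) ^ p) :
    m ≤ C * rieszCap a p S := by
  simp_rw [rieszCap, ENNReal.mul_iInf_of_ne hC₀ hC]
  exact le_iInf₂ fun g hg => h g hg.1 hg.2.1 hg.2.2

end RieszPotential

/-- capacitary estimate for Lebesgue measure, case `1 < p < ∞`, and
absolute continuity of Lebesgue measure with respect to Riesz capacity. -/
theorem lebesgue_abs_cont_rieszCap {n : ℕ} {a p : ℝ}
    (ha : 0 < a) (hp : 1 < p) (hapn : a * p < n) :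
    ∃ C : ℝ, 0 < C ∧
      (∀ (E : Set (Euc n)) (f : Euc n → ℝ),
        MemLp f (ENNReal.ofReal p) volume → (∀ x, 0 ≤ f x) →
        (∀ x ∈ E, 1 ≤ rieszPot a f x) →
        volume E ^ (p / ((n : ℝ) * p / ((n : ℝ) - a * p))) ≤
          ENNReal.ofReal C * ∫⁻ y, ENNReal.ofReal (f y) ^ p) ∧
      ∀ E : Set (Euc n), rieszCap a p E = 0 → volume E = 0 := by
  obtain ⟨C, hC, hweak⟩ := exists_volume_one_le_rieszPot_rpow_le ha hp hapn
  have hp₀ : 0 < p := one_pos.trans hp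
  have hn : (0 : ℝ) < n := (mul_pos ha hp₀).trans hapn
  have hexp : 0 < p / ((n : ℝ) * p / ((n : ℝ) - a * p)) :=
    div_pos hp₀ (div_pos (mul_pos hn hp₀) (sub_pos.2 hapn))
  have hbound (E : Set (Euc n)) (f : Euc n → ℝ) (hf : MemLp f (ENNReal.ofReal p) volume)
      (hE : ∀ x ∈ E, 1 ≤ rieszPot a f x) :
      volume E ^ (p / ((n : ℝ) * p / ((n : ℝ) - a * p))) ≤
        ENNReal.ofReal C * ∫⁻ y, ENNReal.ofReal (f y) ^ p :=
    (ENNReal.rpow_le_rpow (measure_mono hE) hexp.le).trans (hweak f hf.aemeasurable)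
  refine ⟨C, hC, fun E f hf _ hE => hbound E f hf hE, fun E hcap => ?_⟩
  have hle := le_mul_rieszCap (ENNReal.ofReal_pos.2 hC).ne' ENNReal.ofReal_ne_top
    fun g hg _ hE => hbound E g hg hE
  rw [hcap, mul_zero, nonpos_iff_eq_zero] at hle
  exact (ENNReal.rpow_eq_zero_iff_of_pos hexp).1 hle
end
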